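/- arXiv:1703.02848 — 2 statements merged into one kernel-verified Lean document; each statement's English description precedes it below -/
import Mathlib

section
/- Let n = 55 and let x, y ∈ S_55 be the permutations given in the context, with z = (x·y)⁻¹. Then (x, y, z) is a nice triple; the cycle types of x, y, z are 6^8·3^2, 2^25 and 4^12·2^3 respectively; and the subgroup ⟨x, y⟩ of S_55 has cardinality 1320 (the order of PGL(2,11)). -/
/-- `permInd s` = (sum of the cycle type of `s`) − (number of entries of the cycle type of `s`),
i.e. `n` minus the number of cycles of `s` when fixed points are counted as cycles. -/
def permInd {n : ℕ} (s : Equiv.Perm (Fin n)) : ℕ :=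
  s.cycleType.sum - Multiset.card s.cycleType

/-- A `MulAction` is preprimitive if it is pretransitive and every block is trivial. -/
def IsPreprimitive (G : Type*) (X : Type*) [Group G] [MulAction G X] : Prop :=
  MulAction.IsPretransitive G X ∧
    ∀ B : Set X, MulAction.IsBlock G B → MulAction.IsTrivialBlock B

/-- A triple `(x, y, z)` of permutations in `S_n` is *nice*:
(i) `x * y * z = 1`; (ii) `G = ⟨x, y⟩` is neither the alternating nor the symmetric group;
(iii) `G` acts primitively on `Fin n` and is almost simple; (iv) the triple has genus 0;
(v) the triple is rigid in `G`; (vi) `x`, `y`, `z` lie in rational conjugacy classes of `G`. -/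
def IsNice {n : ℕ} (x y z : Equiv.Perm (Fin n)) : Prop :=
  x * y * z = 1 ∧
  (Subgroup.closure {x, y} ≠ alternatingGroup (Fin n) ∧
    Subgroup.closure {x, y} ≠ ⊤) ∧
  IsPreprimitive (Subgroup.closure {x, y}) (Fin n) ∧
  (∃ S : Subgroup (Subgroup.closure {x, y}), S.Normal ∧ IsSimpleGroup S ∧
    (∃ a b : S, a * b ≠ b * a) ∧
    Subgroup.centralizer (S : Set (Subgroup.closure {x, y})) = ⊥) ∧
  permInd x + permInd y + permInd z = 2 * (n - 1) ∧
  (∀ x' y' z' : Equiv.Perm (Fin n),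
    x' * y' * z' = 1 →
    Subgroup.closure {x', y'} = Subgroup.closure {x, y} →
    (∃ g ∈ Subgroup.closure {x, y}, g * x * g⁻¹ = x') →
    (∃ g ∈ Subgroup.closure {x, y}, g * y * g⁻¹ = y') →
    (∃ g ∈ Subgroup.closure {x, y}, g * z * g⁻¹ = z') →
    ∃ g ∈ Subgroup.closure {x, y},
      g * x * g⁻¹ = x' ∧ g * y * g⁻¹ = y' ∧ g * z * g⁻¹ = z') ∧
  ∀ g ∈ ({x, y, z} : Set (Equiv.Perm (Fin n))), ∀ k : ℤ,
    Int.gcd k (orderOf g) = 1 →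
    ∃ h ∈ Subgroup.closure {x, y}, h * g * h⁻¹ = g ^ k

/-- The permutation given by a list of (disjoint) cycles, each written as a list of points. -/
def permOfCycles {n : ℕ} (cs : List (List (Fin n))) : Equiv.Perm (Fin n) :=
  (cs.map List.formPerm).prod

def x : Equiv.Perm (Fin 55) := permOfCycles [
  [1, 33, 17, 8, 41, 32],
  [2, 51, 45, 36, 55, 50],
  [3, 43, 47, 24, 44, 25],
  [4, 40, 49, 52, 18, 6],
  [5, 7, 26, 16, 37, 23],
  [9, 21, 22, 38, 31, 20],
  [10, 48, 29, 30, 35, 19],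
  [11, 28, 54],
  [12, 15, 13, 34, 42, 27],
  [39, 46, 53]]

def y : Equiv.Perm (Fin 55) := permOfCycles [
  [1, 26],
  [2, 41],
  [3, 51],
  [4, 32],
  [5, 29],
  [6, 37],
  [7, 20],
  [8, 47],
  [10, 44],
  [11, 50],
  [12, 52],
  [13, 15],
  [14, 35],
  [17, 46],
  [18, 23],
  [19, 42],
  [21, 48],
  [24, 38],
  [25, 45],
  [27, 30],
  [31, 39],
  [33, 53],
  [34, 36],
  [40, 54],
  [49, 55]]

namespace NT

def look (N : ℕ) (p : Fin 55) : Fin 55 := ⟨N / 64 ^ p.val % 64 % 55, Nat.mod_lt _ (by decide)⟩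

def tperm (N M : ℕ) (h : (∀ p, look M (look N p) = p) ∧ (∀ p, look N (look M p) = p)) :
    Equiv.Perm (Fin 55) := ⟨look N, look M, h.1, h.2⟩

def X : Equiv.Perm (Fin 55) := tperm
  396915650918163137775947864697715313553397517183698494822479644172573154941983246377076342790240370
  981895146293317079715309400397566533952987114624379309735203999554437161251266664768673888728459300
  (by decide +kernel)

def Y : Equiv.Perm (Fin 55) := tperm
  1384754133956850014673136897753443710154718589710540503532436424353221915932670678815533453045307057
  1384754133956850014673136897753443710154718589710540503532436424353221915932670678815533453045307057
  (by decide +kernel)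

def c : Equiv.Perm (Fin 55) := tperm
  1362074064247265991339959507353247257936228986526694951324332654576677239517825280277108007211571076
  1826700840756992755880543935484119893588472130422856955969891930941728718885030870771048689980573510
  (by decide +kernel)

def u : Equiv.Perm (Fin 55) := tperm
  806598634433239483891778966157557439213519252057522840127507422501566221033154911861031323807650882
  140254938438442029373104676762658090192254227785890057093864312150979582617216225443926895838104099
  (by decide +kernel)

def d : Equiv.Perm (Fin 55) := tperm
  1495524702635783392669389362098486992262842979568889667932783916860374906520344226845112889471261896
  1522741962346981815144840874450606503685032498184928748912658980760915762813758412549984700797437555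
  (by decide +kernel)

theorem x_eq : x = X := Equiv.ext (by decide +kernel)
theorem y_eq : y = Y := Equiv.ext (by decide +kernel)

theorem c_word : c = Y*X*Y*X*X*X*Y*X*X*X*Y*X*Y := Equiv.ext (by decide +kernel)
theorem u_word : u = X*X*X*Y*X*X*Y*X*X*Y*X*Y := Equiv.ext (by decide +kernel)
theorem d_word : d = Y*X*Y*X*X*Y*X*X*X*X := Equiv.ext (by decide +kernel)
theorem X_word : X = c ^ 2 := Equiv.ext (by decide +kernel)
theorem c12 : c ^ 12 = 1 := Equiv.ext (by decide +kernel)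
theorem u11 : u ^ 11 = 1 := Equiv.ext (by decide +kernel)
theorem d10 : d ^ 10 = 1 := Equiv.ext (by decide +kernel)
theorem du : d * u = u ^ 2 * d := Equiv.ext (by decide +kernel)
theorem y2 : Y * Y = 1 := Equiv.ext (by decide +kernel)

def tb : List (ℕ × ℕ × ℕ) := [(4, 7, 8), (5, 0, 10), (7, 5, 2), (10, 3, 11), (1, 6, 5), (6, 4, 4),
  (5, 4, 7), (10, 6, 6), (1, 3, 0), (4, 5, 9), (6, 0, 1), (7, 7, 3)]

theorem cy (i : ℕ) (hi : i < 12) : ∃ j k l, c ^ i * Y = u ^ j * d ^ k * c ^ l := by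
  have h : ∀ i : Fin 12, ∀ p, (c ^ i.val * Y) p =
      (u ^ (tb.getD i.val (0,0,0)).1 * d ^ (tb.getD i.val (0,0,0)).2.1
        * c ^ (tb.getD i.val (0,0,0)).2.2) p := by decide +kernel
  exact ⟨_, _, _, Equiv.ext (h ⟨i, hi⟩)⟩

def dfs (fs : List (Equiv.Perm (Fin 55))) : ℕ → List (Fin 55) → ℕ → ℕ
  | 0, _, v => v
  | _ + 1, [], v => v
  | n + 1, p :: s, v => bif v.testBit p.val then dfs fs n s v
      else dfs fs n (fs.map (fun f => f p) ++ s) (v ||| 1 <<< p.val)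

theorem dfs_chk : ∀ j : Fin 11, ∀ k : Fin 5, (j.val ≠ 0 ∨ k.val ≠ 0) →
   dfs [X, d ^ 5 * c, u ^ j.val * d ^ (2 * k.val)] 170 [14] 0 = 2 ^ 55 - 1 := by decide +kernel

theorem rig_chk : ∀ j : Fin 11, ∀ k : Fin 10,
   (∀ p, ((X * ((u ^ j.val * d ^ k.val)⁻¹ * Y * (u ^ j.val * d ^ k.val)))^4) p = p) →
   (¬ ∀ p, ((X * ((u ^ j.val * d ^ k.val)⁻¹ * Y * (u ^ j.val * d ^ k.val)))^2) p = p) →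
   ∃ i : Fin 12, ∀ p, (c ^ i.val * Y * (c ^ i.val)⁻¹) p =
     ((u ^ j.val * d ^ k.val)⁻¹ * Y * (u ^ j.val * d ^ k.val)) p := by decide +kernel

theorem d_pow_u (k m : ℕ) : d ^ k * u ^ m = u ^ (2 ^ k * m) * d ^ k := by
  have h1 : ∀ m : ℕ, d * u ^ m = u ^ (2 * m) * d := by
    intro m
    induction m with
    | zero => simp
    | succ m ih =>
      rw [pow_succ, ← mul_assoc, ih, mul_assoc, du, ← mul_assoc, ← pow_add]; rfl
  induction k generalizing m with
  | zero => simp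
  | succ k ih =>
    rw [pow_succ, mul_assoc, h1, ← mul_assoc, ih, mul_assoc, pow_succ, mul_assoc (2 ^ k) 2 m]

def Form (g : Equiv.Perm (Fin 55)) : Prop := ∃ j k i : ℕ, g = u ^ j * d ^ k * c ^ i

theorem Form.mul_c {g} (h : Form g) (n : ℕ) : Form (g * c ^ n) := by
  obtain ⟨j, k, i, rfl⟩ := h
  exact ⟨j, k, i + n, by rw [pow_add]; group⟩

theorem Form.mul_y {g} (h : Form g) : Form (g * Y) := by
  obtain ⟨j, k, i, rfl⟩ := h
  obtain ⟨j', k', l, e⟩ := cy (i % 12) (Nat.mod_lt _ (by norm_num))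
  rw [← pow_eq_pow_mod i c12] at e
  refine ⟨j + 2 ^ k * j', k + k', l, ?_⟩
  rw [mul_assoc _ (c ^ i), e, pow_add, pow_add]
  simp only [mul_assoc]
  rw [← mul_assoc (d ^ k) (u ^ j'), d_pow_u]
  simp only [mul_assoc]

abbrev G : Subgroup (Equiv.Perm (Fin 55)) := Subgroup.closure {x, y}

theorem xG : X ∈ G := x_eq ▸ Subgroup.subset_closure (by simp)
theorem yG : Y ∈ G := y_eq ▸ Subgroup.subset_closure (by simp)

theorem cG : c ∈ G := by
  rw [c_word]
  repeat' apply mul_mem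
  all_goals first | exact xG | exact yG
theorem uG : u ∈ G := by
  rw [u_word]
  repeat' apply mul_mem
  all_goals first | exact xG | exact yG
theorem dG : d ∈ G := by
  rw [d_word]
  repeat' apply mul_mem
  all_goals first | exact xG | exact yG

theorem form_of_mem {g} (h : g ∈ G) : Form g := by
  induction h using Subgroup.closure_induction_right with
  | one => exact ⟨0, 0, 0, by simp⟩
  | mul_right a ha b hb ih =>
    rcases hb with rfl | rfl
    · rw [x_eq, X_word]; exact ih.mul_c 2
    · rw [y_eq]; exact ih.mul_y
  | mul_inv_cancel a ha b hb ih =>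
    rcases hb with rfl | rfl
    · rw [x_eq, X_word, show (c ^ 2)⁻¹ = c ^ 10 from
        inv_eq_of_mul_eq_one_right (by rw [← pow_add, c12])]
      exact ih.mul_c 10
    · rw [y_eq, show Y⁻¹ = Y from inv_eq_of_mul_eq_one_right y2]; exact ih.mul_y

theorem form_bdd {g} (h : g ∈ G) : ∃ (j : Fin 11) (k : Fin 10) (i : Fin 12),
    g = u ^ j.val * d ^ k.val * c ^ i.val := by
  obtain ⟨j, k, i, rfl⟩ := form_of_mem h
  refine ⟨⟨j % 11, Nat.mod_lt _ (by norm_num)⟩, ⟨k % 10, Nat.mod_lt _ (by norm_num)⟩,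
    ⟨i % 12, Nat.mod_lt _ (by norm_num)⟩, ?_⟩
  simp only
  rw [← pow_eq_pow_mod j u11, ← pow_eq_pow_mod k d10, ← pow_eq_pow_mod i c12]

theorem c14 : c 14 = 14 := by decide +kernel

theorem ci14 (i : ℕ) : (c ^ i) 14 = 14 := by
  induction i with
  | zero => rfl
  | succ n ih => rw [pow_succ, Equiv.Perm.mul_apply, c14, ih]

theorem stab_chk : ∀ j : Fin 11, ∀ k : Fin 10, (u ^ j.val * d ^ k.val) 14 = 14 →
  j.val = 0 ∧ (k.val = 0 ∨ k.val = 5) := by decide +kernel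

theorem stab_form {g} (h : g ∈ G) (h14 : g 14 = 14) :
    ∃ e i : ℕ, g = (d ^ 5) ^ e * c ^ i := by
  obtain ⟨j, k, i, rfl⟩ := form_bdd h
  rw [Equiv.Perm.mul_apply, ci14] at h14
  obtain ⟨h1, h2⟩ := stab_chk j k h14
  rcases h2 with h2 | h2
  · exact ⟨0, i, by rw [h1, h2]; simp⟩
  · exact ⟨1, i, by rw [h1, h2]; simp⟩

theorem trans_chk : ∀ p : Fin 55, ∃ j : Fin 11, ∃ k : Fin 5,
  (u ^ j.val * d ^ (2 * k.val)) 14 = p := by decide +kernel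

theorem dfs_sound (P : Fin 55 → Prop) (fs : List (Equiv.Perm (Fin 55)))
    (hf : ∀ f ∈ fs, ∀ p, P p → P (f p)) (n : ℕ) : ∀ (s : List (Fin 55)) (v : ℕ),
    (∀ p ∈ s, P p) → (∀ p : Fin 55, v.testBit p.val = true → P p) →
    ∀ p : Fin 55, (dfs fs n s v).testBit p.val = true → P p := by
  induction n with
  | zero => intro s v _ hv; exact hv
  | succ n ih =>
    intro s v hs hv
    match s with
    | [] => exact hv
    | q :: s =>
      rw [dfs]
      cases hb : v.testBit q.val with
      | true =>
        exact ih s v (fun p hp => hs p (List.mem_cons_of_mem _ hp)) hv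
      | false =>
        refine ih _ _ ?_ ?_
        · intro p hp
          rcases List.mem_append.1 hp with hp | hp
          · obtain ⟨f, hfm, rfl⟩ := List.mem_map.1 hp
            exact hf f hfm q (hs q (by simp))
          · exact hs p (List.mem_cons_of_mem _ hp)
        · intro p hp
          rw [Nat.testBit_or, Bool.or_eq_true] at hp
          rcases hp with hp | hp
          · exact hv p hp
          · rw [Nat.shiftLeft_eq, one_mul, Nat.testBit_two_pow] at hp
            have : q = p := Fin.ext (by simpa using hp)
            exact this ▸ hs q (by simp)

theorem prim (H : Subgroup (Equiv.Perm (Fin 55))) (hx : X ∈ H) (hd : d ^ 5 * c ∈ H) (hu : u ∈ H)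
    (hd2 : d ^ 2 ∈ H) : MulAction.IsPreprimitive H (Fin 55) := by
  have hb : ∀ j k : ℕ, u ^ j * d ^ (2 * k) ∈ H := fun j k =>
    mul_mem (pow_mem hu _) (by rw [pow_mul]; exact pow_mem hd2 _)
  have ht : MulAction.IsPretransitive H (Fin 55) := by
    have h0 : ∀ p : Fin 55, ∃ g : H, g • (14 : Fin 55) = p := fun p => by
      obtain ⟨j, k, h⟩ := trans_chk p
      exact ⟨⟨_, hb j k⟩, h⟩
    constructor
    intro a b
    obtain ⟨g, rfl⟩ := h0 a
    obtain ⟨h, rfl⟩ := h0 b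
    exact ⟨h * g⁻¹, by simp [mul_smul]⟩
  apply MulAction.IsPreprimitive.of_isTrivialBlock_base (14 : Fin 55)
  intro B h14 hB
  by_cases hs : B ⊆ {14}
  · exact Or.inl (Set.subsingleton_singleton.anti hs)
  right
  obtain ⟨b, hbB, hb14⟩ := Set.not_subset.1 hs
  obtain ⟨j, k, hjk⟩ := trans_chk b
  have key : ∀ f ∈ H, f 14 ∈ B → ∀ p, p ∈ B → f p ∈ B := by
    intro f hf hfB p hp
    have := hB.smul_eq_of_mem (g := (⟨f, hf⟩ : H)) h14 hfB
    rw [← this]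
    exact Set.smul_mem_smul_set (a := (⟨f, hf⟩ : H)) hp
  have hne : j.val ≠ 0 ∨ k.val ≠ 0 := by
    by_contra hcon
    push Not at hcon
    apply hb14
    rw [← hjk, hcon.1, hcon.2]; rfl
  have hchk := dfs_chk j k hne
  ext p
  simp only [Set.mem_univ, iff_true]
  have hbit : (dfs [X, d ^ 5 * c, u ^ j.val * d ^ (2 * k.val)] 170 [14] 0).testBit p.val = true := by
    rw [hchk, Nat.testBit_two_pow_sub_one]; simp
  refine dfs_sound (fun p => p ∈ B) _ ?_ 170 [14] 0 ?_ ?_ p hbit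
  · intro f hf
    simp only [List.mem_cons, List.not_mem_nil, or_false] at hf
    rcases hf with rfl | rfl | rfl
    · exact key _ hx (by rwa [show X 14 = 14 by decide +kernel])
    · exact key _ hd (by rwa [show (d ^ 5 * c) 14 = 14 by decide +kernel])
    · exact key _ (hb _ _) (by rwa [hjk])
  · intro p hp
    rw [List.mem_singleton] at hp
    rwa [hp]
  · intro p hp; simp at hp

theorem ct (cs : List (List (Fin 55)))
    (h : (∀ l ∈ cs, l.Nodup ∧ 2 ≤ l.length) ∧ cs.Pairwise List.Disjoint) :
    (permOfCycles cs).cycleType = ((cs.map List.length : List ℕ) : Multiset ℕ) := by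
  rw [permOfCycles, Equiv.Perm.cycleType_eq (cs.map List.formPerm) rfl]
  · congr 1
    rw [List.map_map]
    apply List.map_congr_left
    intro l hl
    obtain ⟨h1, h2⟩ := h.1 l hl
    simp only [Function.comp]
    rw [List.support_formPerm_of_nodup l h1 (by rintro a rfl; simp at h2),
      List.toFinset_card_of_nodup h1]
  · intro s hs
    obtain ⟨l, hl, rfl⟩ := List.mem_map.1 hs
    exact List.isCycle_formPerm (h.1 l hl).1 (h.1 l hl).2
  · rw [List.pairwise_map]
    refine h.2.imp_of_mem ?_
    intro a b ha hb hab
    exact (List.formPerm_disjoint_iff (h.1 a ha).1 (h.1 b hb).1 (h.1 a ha).2 (h.1 b hb).2).2 hab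

instance ldd (a b : List (Fin 55)) : Decidable (a.Disjoint b) :=
  decidable_of_iff (∀ p ∈ a, p ∉ b) ⟨fun h p h1 h2 => h p h1 h2, fun h _ h1 h2 => h h1 h2⟩

theorem ctx : x.cycleType = Multiset.replicate 8 6 + Multiset.replicate 2 3 := by
  unfold x
  rw [ct _ (by decide +kernel)]
  decide +kernel

theorem cty : y.cycleType = Multiset.replicate 25 2 := by
  unfold y
  rw [ct _ (by decide +kernel)]
  decide +kernel

def zc : List (List (Fin 55)) :=
  [[0, 34, 15, 52], [1, 4, 37, 16], [2, 11, 40, 32], [3, 45], [5, 18, 12, 30], [6, 23],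
   [7, 29, 21, 9], [8, 46, 31, 24], [10, 42, 36, 25], [14, 35, 27, 19], [17, 53],
   [20, 39, 33, 26], [22, 48, 44, 38], [28, 50, 49, 54], [41, 47, 43, 51]]

theorem z_eq : (X * Y)⁻¹ = permOfCycles zc := Equiv.ext (by decide +kernel)

theorem ctz : ((x * y)⁻¹).cycleType = Multiset.replicate 12 4 + Multiset.replicate 3 2 := by
  rw [x_eq, y_eq, z_eq, ct _ (by decide +kernel)]
  decide +kernel

theorem signX : Equiv.Perm.sign X = 1 := by
  rw [← x_eq, Equiv.Perm.sign_of_cycleType, ctx]; decide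

theorem signY : Equiv.Perm.sign Y = -1 := by
  rw [← y_eq, Equiv.Perm.sign_of_cycleType, cty]; decide

theorem signc : Equiv.Perm.sign c = -1 := by
  rw [c_word]; simp only [map_mul, signX, signY]; decide
theorem signu : Equiv.Perm.sign u = 1 := by
  rw [u_word]; simp only [map_mul, signX, signY]; decide
theorem signd : Equiv.Perm.sign d = -1 := by
  rw [d_word]; simp only [map_mul, signX, signY]; decide

def S0 : Subgroup (Equiv.Perm (Fin 55)) := G ⊓ alternatingGroup (Fin 55)

theorem mem_S0 {g} : g ∈ S0 ↔ g ∈ G ∧ Equiv.Perm.sign g = 1 := by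
  rw [S0, Subgroup.mem_inf, Equiv.Perm.mem_alternatingGroup]

theorem XS : X ∈ S0 := mem_S0.2 ⟨xG, signX⟩
theorem uS : u ∈ S0 := mem_S0.2 ⟨uG, signu⟩
theorem d2S : d ^ 2 ∈ S0 := mem_S0.2 ⟨pow_mem dG 2, by rw [map_pow, signd]; decide⟩
theorem d5cS : d ^ 5 * c ∈ S0 :=
  mem_S0.2 ⟨mul_mem (pow_mem dG 5) cG, by rw [map_mul, map_pow, signd, signc]; decide⟩
theorem dc3S : d * c ^ 3 ∈ S0 :=
  mem_S0.2 ⟨mul_mem dG (pow_mem cG 3), by rw [map_mul, map_pow, signd, signc]; decide⟩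

theorem bS (j k : ℕ) : u ^ j * d ^ (2 * k) ∈ S0 :=
  mul_mem (pow_mem uS _) (by rw [pow_mul]; exact pow_mem d2S _)

theorem S0_le (K : Subgroup (Equiv.Perm (Fin 55))) (hu : u ∈ K) (hd : d ^ 2 ∈ K) (hX : X ∈ K)
    (hdc : d * c ∈ K) : S0 ≤ K := by
  intro g hg
  obtain ⟨hg, hs⟩ := mem_S0.1 hg
  obtain ⟨j, k, i, rfl⟩ := form_of_mem hg
  rw [map_mul, map_mul, map_pow, map_pow, map_pow, signu, signd, signc, one_pow, one_mul,
    ← pow_add] at hs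
  have he : Even (k + i) := by
    by_contra ho
    rw [Nat.not_even_iff_odd] at ho
    rw [ho.neg_one_pow] at hs
    exact absurd hs (by decide)
  rcases Nat.even_or_odd' k with ⟨a, rfl | rfl⟩
  · obtain ⟨b, rfl⟩ : ∃ b, i = 2 * b := by
      obtain ⟨r, hr⟩ := he; exact ⟨r - a, by omega⟩
    rw [pow_mul, pow_mul c, ← X_word]
    exact mul_mem (mul_mem (pow_mem hu _) (pow_mem hd _)) (pow_mem hX _)
  · obtain ⟨b, rfl⟩ : ∃ b, i = 1 + 2 * b := by
      obtain ⟨r, hr⟩ := he; exact ⟨r - a - 1, by omega⟩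
    have : u ^ j * d ^ (2 * a + 1) * c ^ (1 + 2 * b)
        = u ^ j * (d ^ 2) ^ a * (d * c) * X ^ b := by
      rw [X_word, pow_succ, pow_add c, pow_mul, pow_mul, pow_one]; simp only [mul_assoc]
    rw [this]
    exact mul_mem (mul_mem (mul_mem (pow_mem hu _) (pow_mem hd _)) hdc) (pow_mem hX _)

def tc (j k : ℕ) : Equiv.Perm (Fin 55) := (u ^ j * d ^ (2 * k)) * X ^ 3 * (u ^ j * d ^ (2 * k))⁻¹

theorem gen (K : Subgroup (Equiv.Perm (Fin 55))) (h : ∀ j k, tc j k ∈ K) : S0 ≤ K := by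
  apply S0_le
  · rw [show u = tc 0 0 * tc 3 1 * tc 7 1 from Equiv.ext (by decide +kernel)]
    exact mul_mem (mul_mem (h _ _) (h _ _)) (h _ _)
  · rw [show d ^ 2 = tc 0 0 * tc 0 2 from Equiv.ext (by decide +kernel)]
    exact mul_mem (h _ _) (h _ _)
  · rw [show X = tc 1 1 * tc 10 1 from Equiv.ext (by decide +kernel)]
    exact mul_mem (h _ _) (h _ _)
  · rw [show d * c = tc 0 4 * tc 9 0 from Equiv.ext (by decide +kernel)]
    exact mul_mem (h _ _) (h _ _)

theorem gen' (W : Subgroup S0)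
    (h : ∀ j k, (⟨_, bS j k⟩ * ⟨X, XS⟩ ^ 3 * (⟨_, bS j k⟩ : S0)⁻¹ : S0) ∈ W) : W = ⊤ := by
  have h1 : S0 ≤ W.map S0.subtype := gen _ fun j k => ⟨_, h j k, rfl⟩
  rw [eq_top_iff]
  intro g _
  obtain ⟨g', hg', e⟩ := h1 g.2
  have : g' = g := Subtype.ext e
  exact this ▸ hg'

theorem perfect : commutator S0 = ⊤ := by
  apply gen'
  intro j k
  have hn : (commutator S0).Normal := inferInstance
  apply hn.conj_mem
  have hk : (⟨_, dc3S⟩ * ⟨_, bS 4 2⟩ * ⟨_, dc3S⟩⁻¹ * (⟨_, bS 4 2⟩ : S0)⁻¹ : S0) ∈ commutator S0 :=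
    Subgroup.commutator_mem_commutator (Subgroup.mem_top _) (Subgroup.mem_top _)
  have e : (⟨X, XS⟩ ^ 3 : S0) = ⟨_, dc3S⟩ * ⟨_, bS 4 2⟩ * ⟨_, dc3S⟩⁻¹ * (⟨_, bS 4 2⟩ : S0)⁻¹ := by
    apply Subtype.ext
    show X ^ 3 = (d * c ^ 3) * (u ^ 4 * d ^ (2 * 2)) * (d * c ^ 3)⁻¹ * (u ^ 4 * d ^ (2 * 2))⁻¹
    exact Equiv.ext (by decide +kernel)
  rw [e]
  exact hk

theorem X3c : Commute (X ^ 3) c := by rw [X_word]; exact ((Commute.refl c).pow_left 2).pow_left 3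
theorem X3d : Commute (X ^ 3) (d ^ 5) := Equiv.ext (by decide +kernel)

theorem X3comm {g} (hg : g ∈ G) (h14 : g 14 = 14) : g * X ^ 3 = X ^ 3 * g := by
  obtain ⟨e, i, rfl⟩ := stab_form hg h14
  exact ((X3d.pow_right e).mul_right (X3c.pow_right i)).eq.symm

def TT (p : Fin 55) : Subgroup S0 :=
  MulAction.stabilizer S0 p ⊓ Subgroup.centralizer (MulAction.stabilizer S0 p : Set S0)

theorem mem_TT {p : Fin 55} {g : S0} :
    g ∈ TT p ↔ g • p = p ∧ ∀ h : S0, h • p = p → h * g = g * h := by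
  rw [TT, Subgroup.mem_inf, MulAction.mem_stabilizer_iff, Subgroup.mem_centralizer_iff]
  rfl

theorem TT_conj' (g : S0) (p : Fin 55) (s : S0) (hs : s ∈ TT p) : g * s * g⁻¹ ∈ TT (g • p) := by
  rw [mem_TT] at hs ⊢
  refine ⟨by simp [mul_smul, hs.1], fun h hh => ?_⟩
  have := hs.2 (g⁻¹ * h * g) (by simp [mul_smul, hh])
  calc h * (g * s * g⁻¹) = g * ((g⁻¹ * h * g) * s) * g⁻¹ := by group
    _ = g * (s * (g⁻¹ * h * g)) * g⁻¹ := by rw [this]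
    _ = _ := by group

def iwa : MulAction.IwasawaStructure S0 (Fin 55) where
  T := TT
  is_comm p := by
    refine ⟨⟨fun a b => Subtype.ext ?_⟩⟩
    exact (mem_TT.1 b.2).2 a.1 (mem_TT.1 a.2).1
  is_conj g p := by
    ext s
    rw [Subgroup.mem_pointwise_smul_iff_inv_smul_mem]
    have e : (MulAut.conj g)⁻¹ • s = g⁻¹ * s * g := by
      rw [← map_inv]; simp [MulAut.smul_def]
    rw [e]
    constructor
    · intro h
      have := TT_conj' g⁻¹ _ s h
      simpa using this
    · intro h
      have := TT_conj' g _ _ h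
      simpa [mul_assoc] using this
  is_generator := by
    apply gen'
    intro j k
    apply Subgroup.mem_iSup_of_mem ((⟨_, bS j k⟩ : S0) • (14 : Fin 55))
    apply TT_conj'
    rw [mem_TT]
    refine ⟨?_, fun h hh => Subtype.ext (X3comm (mem_S0.1 h.2).1 hh)⟩
    show (X ^ 3) 14 = 14
    decide +kernel

theorem Xu : X * u ≠ u * X := by
  intro h
  exact absurd (Equiv.congr_fun h 14) (by decide +kernel)

theorem simple : IsSimpleGroup S0 := by
  have := prim S0 XS d5cS uS d2S
  have : Nontrivial S0 := ⟨⟨X, XS⟩, ⟨u, uS⟩, fun h => Xu (by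
    have : X = u := congrArg Subtype.val h
    rw [this])⟩
  exact MulAction.IwasawaStructure.isSimpleGroup perfect iwa inferInstance

theorem almost : ∃ S : Subgroup G, S.Normal ∧ IsSimpleGroup S ∧
    (∃ a b : S, a * b ≠ b * a) ∧ Subgroup.centralizer (S : Set G) = ⊥ := by
  have hle : S0 ≤ G := inf_le_left
  refine ⟨S0.subgroupOf G, ⟨?_⟩, ?_, ?_, ?_⟩
  · intro n hn g
    rw [Subgroup.mem_subgroupOf, mem_S0] at hn ⊢
    refine ⟨(g * n * g⁻¹).2, ?_⟩
    simp [hn.2]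
  · have := simple
    exact (Subgroup.subgroupOfEquivOfLe hle).isSimpleGroup
  · refine ⟨⟨⟨X, xG⟩, XS⟩, ⟨⟨u, uG⟩, uS⟩, fun h => Xu ?_⟩
    exact congrArg (fun s => ((s.1 : G) : Equiv.Perm (Fin 55))) h
  · rw [eq_bot_iff]
    intro g hg
    rw [Subgroup.mem_centralizer_iff] at hg
    have hc : ∀ s ∈ S0, s * g.1 = g.1 * s := fun s hs =>
      congrArg Subtype.val (hg ⟨s, hle hs⟩ hs)
    have hfix : ∀ p : Fin 55, X p = p → p = 14 := by decide +kernel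
    have h14 : g.1 14 = 14 := by
      apply hfix
      have := Equiv.congr_fun (hc X XS) 14
      rw [Equiv.Perm.mul_apply, Equiv.Perm.mul_apply, show X 14 = 14 by decide +kernel] at this
      exact this
    rw [Subgroup.mem_bot]
    apply Subtype.ext
    apply Equiv.ext
    intro p
    obtain ⟨j, k, rfl⟩ := trans_chk p
    have := Equiv.congr_fun (hc _ (bS j k)) 14
    rw [Equiv.Perm.mul_apply, Equiv.Perm.mul_apply, h14] at this
    exact this.symm

theorem card_le : Nat.card G ≤ 1320 := by
  let f : Fin 11 × Fin 10 × Fin 12 → G := fun t =>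
    ⟨u ^ t.1.val * d ^ t.2.1.val * c ^ t.2.2.val,
      mul_mem (mul_mem (pow_mem uG _) (pow_mem dG _)) (pow_mem cG _)⟩
  have hf : Function.Surjective f := by
    intro g
    obtain ⟨j, k, i, h⟩ := form_bdd g.2
    exact ⟨(j, k, i), Subtype.ext h.symm⟩
  have := Nat.card_le_card_of_surjective f hf
  simpa using this

theorem prime12 : orderOf c = 12 := by
  apply orderOf_eq_of_pow_and_pow_div_prime (by norm_num) c12
  intro p hp hd
  have h2 : p = 2 ∨ p = 3 := by
    have hle := Nat.le_of_dvd (by norm_num) hd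
    interval_cases p <;> first | (left; rfl) | (right; rfl) | (norm_num at hd; done) |
      (norm_num at hp; done)
  rcases h2 with rfl | rfl
  · exact fun h => absurd (Equiv.congr_fun h 0) (by decide +kernel)
  · exact fun h => absurd (Equiv.congr_fun h 0) (by decide +kernel)

theorem d5c : ∀ i : Fin 12, ¬ ∀ p, (c ^ i.val) p = (d ^ 5) p := by decide +kernel

theorem card_ge : 1320 ≤ Nat.card G := by
  have hp := prim G xG (mul_mem (pow_mem dG 5) cG) uG (pow_mem dG 2)
  have h1 := MulAction.index_stabilizer_of_transitive G (14 : Fin 55)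
  have h2 := Subgroup.card_mul_index (MulAction.stabilizer G (14 : Fin 55))
  rw [h1] at h2
  rw [show Nat.card (Fin 55) = 55 by simp] at h2
  let cc : MulAction.stabilizer G (14 : Fin 55) := ⟨⟨c, cG⟩, c14⟩
  let dd : MulAction.stabilizer G (14 : Fin 55) :=
    ⟨⟨d ^ 5, pow_mem dG 5⟩, by show (d ^ 5) 14 = 14; decide +kernel⟩
  have ho : orderOf cc = 12 := by
    rw [← prime12, ← Subgroup.orderOf_coe, ← Subgroup.orderOf_coe]
  have h3 := Subgroup.card_mul_index (Subgroup.zpowers cc)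
  rw [Nat.card_zpowers, ho] at h3
  have h4 : (Subgroup.zpowers cc).index ≠ 1 := by
    rw [ne_eq, Subgroup.index_eq_one]
    intro h
    have : dd ∈ Subgroup.zpowers cc := h ▸ Subgroup.mem_top _
    rw [← mem_powers_iff_mem_zpowers, Submonoid.mem_powers_iff] at this
    obtain ⟨n, hn⟩ := this
    have e : c ^ n = d ^ 5 := congrArg (fun s => ((s.1 : G) : Equiv.Perm (Fin 55))) hn
    rw [pow_eq_pow_mod n c12] at e
    exact d5c ⟨n % 12, Nat.mod_lt _ (by norm_num)⟩ (Equiv.congr_fun e)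
  have h5 : (Subgroup.zpowers cc).index ≠ 0 := Subgroup.index_ne_zero_of_finite
  omega

theorem card_G : Nat.card G = 1320 := le_antisymm card_le card_ge

theorem rigid_aux {g s : Equiv.Perm (Fin 55)} (hg : g ∈ G)
    (hs : X * (g * Y * g⁻¹) = s * (X * Y) * s⁻¹) :
    ∃ w ∈ G, w * X * w⁻¹ = X ∧ w * Y * w⁻¹ = g * Y * g⁻¹ := by
  obtain ⟨j, k, i, hb⟩ := form_bdd (inv_mem hg)
  set b := u ^ j.val * d ^ k.val with hbdef
  have hgb : g = (c ^ i.val)⁻¹ * b⁻¹ := by rw [← inv_inv g, hb, mul_inv_rev]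
  have hXc : ∀ n : ℕ, X * c ^ n = c ^ n * X := fun n => by
    rw [X_word, ← pow_add, ← pow_add, add_comm]
  have e1 : X * (b⁻¹ * Y * b) = (c ^ i.val * s) * (X * Y) * (c ^ i.val * s)⁻¹ := by
    calc X * (b⁻¹ * Y * b) = X * c ^ i.val * (g * Y * g⁻¹) * (c ^ i.val)⁻¹ := by rw [hgb]; group
      _ = c ^ i.val * (X * (g * Y * g⁻¹)) * (c ^ i.val)⁻¹ := by rw [hXc]; group
      _ = _ := by rw [hs]; group
  have h4 : (X * Y) ^ 4 = 1 := Equiv.ext (by decide +kernel)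
  have h2 : (X * Y) ^ 2 ≠ 1 := fun h => absurd (Equiv.congr_fun h 0) (by decide +kernel)
  have hc1 : (X * (b⁻¹ * Y * b)) ^ 4 = 1 := by rw [e1, conj_pow, h4]; group
  have hc2 : (X * (b⁻¹ * Y * b)) ^ 2 ≠ 1 := by
    rw [e1, conj_pow]
    intro h
    rw [conj_eq_one_iff] at h
    exact h2 h
  obtain ⟨l, hl⟩ := rig_chk j k (Equiv.congr_fun hc1) (fun h => hc2 (Equiv.ext h))
  have hl' : c ^ l.val * Y * (c ^ l.val)⁻¹ = b⁻¹ * Y * b := Equiv.ext hl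
  refine ⟨(c ^ i.val)⁻¹ * c ^ l.val, mul_mem (inv_mem (pow_mem cG _)) (pow_mem cG _), ?_, ?_⟩
  · calc (c ^ i.val)⁻¹ * c ^ l.val * X * ((c ^ i.val)⁻¹ * c ^ l.val)⁻¹
        = (c ^ i.val)⁻¹ * (c ^ l.val * X) * (c ^ l.val)⁻¹ * c ^ i.val := by group
      _ = (c ^ i.val)⁻¹ * (X * c ^ i.val) := by rw [← hXc]; group
      _ = X := by rw [hXc]; group
  · calc (c ^ i.val)⁻¹ * c ^ l.val * Y * ((c ^ i.val)⁻¹ * c ^ l.val)⁻¹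
        = (c ^ i.val)⁻¹ * (c ^ l.val * Y * (c ^ l.val)⁻¹) * c ^ i.val := by group
      _ = _ := by rw [hl', hgb]; group

theorem rat_aux (g h : Equiv.Perm (Fin 55)) (n : ℕ) (hn : n = 2 ∨ n = 4 ∨ n = 6)
    (ho : orderOf g = n) (hh : h ∈ G) (hinv : h * g * h⁻¹ = g⁻¹) (k : ℤ)
    (hk : Int.gcd k (orderOf g) = 1) : ∃ h ∈ G, h * g * h⁻¹ = g ^ k := by
  have hm : k % n = 1 ∨ k % n = n - 1 := by
    rw [ho] at hk
    have h2 : ¬ (2 : ℤ) ∣ k := fun h2 => by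
      have : (2 : ℤ) ∣ (Int.gcd k n : ℤ) := Int.dvd_coe_gcd h2 (by rcases hn with rfl | rfl | rfl <;> norm_num)
      rw [hk] at this; norm_num at this
    rcases hn with rfl | rfl | rfl
    · push_cast; omega
    · push_cast; omega
    · have h3 : ¬ (3 : ℤ) ∣ k := fun h2 => by
        have : (3 : ℤ) ∣ (Int.gcd k (6 : ℕ) : ℤ) := Int.dvd_coe_gcd h2 (by norm_num)
        rw [hk] at this; norm_num at this
      push_cast; omega
  rw [← zpow_mod_orderOf, ho]
  rcases hm with hm | hm
  · exact ⟨1, one_mem _, by rw [hm]; simp⟩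
  · refine ⟨h, hh, ?_⟩
    rw [hm, hinv, zpow_sub, zpow_natCast, ← ho, pow_orderOf_eq_one]; simp

theorem ord_x : orderOf x = 6 := by
  rw [← Equiv.Perm.lcm_cycleType, ctx]; decide
theorem ord_y : orderOf y = 2 := by
  rw [← Equiv.Perm.lcm_cycleType, cty]; decide
theorem ord_z : orderOf (x * y)⁻¹ = 4 := by
  rw [← Equiv.Perm.lcm_cycleType, ctz]; decide

theorem nice : IsNice x y (x * y)⁻¹ := by
  have hp := prim G xG (mul_mem (pow_mem dG 5) cG) uG (pow_mem dG 2)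
  refine ⟨by simp, ⟨?_, ?_⟩, ⟨hp.toIsPretransitive, fun B hB => hp.isTrivialBlock_of_isBlock hB⟩,
    almost, ?_, ?_, ?_⟩
  · intro h
    have h1 : Y ∈ alternatingGroup (Fin 55) := h ▸ yG
    rw [Equiv.Perm.mem_alternatingGroup, signY] at h1
    exact absurd h1 (by decide)
  · intro h
    have h1 : Nat.card G = 1320 := card_G
    rw [G, h, Subgroup.card_top, Nat.card_eq_fintype_card, Fintype.card_perm, Fintype.card_fin] at h1
    have h2 : (7 : ℕ).factorial ≤ (55 : ℕ).factorial := Nat.factorial_le (by norm_num)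
    rw [h1] at h2
    exact absurd h2 (by decide)
  · rw [permInd, permInd, permInd, ctx, cty, ctz]; decide
  · rintro x' y' z' h1 - ⟨g1, hg1, rfl⟩ ⟨g2, hg2, rfl⟩ ⟨g3, hg3, rfl⟩
    rw [x_eq, y_eq] at h1 ⊢
    have hs : X * ((g1⁻¹ * g2) * Y * (g1⁻¹ * g2)⁻¹) = (g1⁻¹ * g3) * (X * Y) * (g1⁻¹ * g3)⁻¹ := by
      have h2 := eq_inv_of_mul_eq_one_left h1
      calc X * ((g1⁻¹ * g2) * Y * (g1⁻¹ * g2)⁻¹)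
          = g1⁻¹ * (g1 * X * g1⁻¹ * (g2 * Y * g2⁻¹)) * g1 := by group
        _ = _ := by rw [h2]; group
    obtain ⟨w, hw, hwx, hwy⟩ := rigid_aux (mul_mem (inv_mem hg1) hg2) hs
    have e1 : g1 * w * X * (g1 * w)⁻¹ = g1 * X * g1⁻¹ := by
      calc _ = g1 * (w * X * w⁻¹) * g1⁻¹ := by group
        _ = _ := by rw [hwx]
    have e2 : g1 * w * Y * (g1 * w)⁻¹ = g2 * Y * g2⁻¹ := by
      calc _ = g1 * (w * Y * w⁻¹) * g1⁻¹ := by group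
        _ = _ := by rw [hwy]; group
    refine ⟨g1 * w, ?_, e1, e2, ?_⟩
    · rw [← x_eq, ← y_eq]
      exact mul_mem hg1 hw
    · rw [eq_inv_of_mul_eq_one_right h1, ← e1, ← e2]; group
  · intro g hg k hk
    rcases hg with rfl | rfl | rfl
    · refine rat_aux _ (d ^ 5) 6 (by simp) ord_x (pow_mem dG 5) ?_ k hk
      rw [x_eq]; exact Equiv.ext (by decide +kernel)
    · refine rat_aux _ 1 2 (by simp) ord_y (one_mem _) ?_ k hk
      rw [y_eq]; exact Equiv.ext (by decide +kernel)
    · refine rat_aux _ (u ^ 4 * d ^ 5) 4 (by simp) ord_z (mul_mem (pow_mem uG 4) (pow_mem dG 5)) ?_ k hk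
      rw [x_eq, y_eq]; exact Equiv.ext (by decide +kernel)

end NT

theorem nice_triple_deg55_stmt3 :
    IsNice x y (x * y)⁻¹ ∧
    x.cycleType = Multiset.replicate 8 6 + Multiset.replicate 2 3 ∧
    y.cycleType = Multiset.replicate 25 2 ∧
    ((x * y)⁻¹).cycleType = Multiset.replicate 12 4 + Multiset.replicate 3 2 ∧
    Nat.card ↥(Subgroup.closure {x, y} : Subgroup (Equiv.Perm (Fin 55))) = 1320 :=
  ⟨NT.nice, NT.ctx, NT.cty, NT.ctz, NT.card_G⟩
end

section
/- With p, q ∈ ℚ[X] as in the context (the Belyi map of degree 56 for the normalizer of PSL(3,4) in S_56), the polynomial F = p − t·q ∈ K[X] has degree 56, is irreducible over K = ℚ(t), and its Galois group Polynomial.Gal F (the Galois group of the splitting field of F over K) has cardinality 80640, the order of PSL(3,4):2^2. -/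
open Polynomial

noncomputable section

def p : Polynomial ℚ :=
    (X ^ 2 - 6 * X - 1) ^ 2 * (3 * X ^ 4 - 468 * X ^ 3 - 258 * X ^ 2 - 60 * X - 5) * (3 * X ^
    4 + 36 * X ^ 3 + 54 * X ^ 2 + 60 * X + 19) ^ 4 * (3 * X ^ 8 - 96 * X ^ 7 - 12 * X ^ 6 +
    432 * X ^ 5 + 1498 * X ^ 4 - 320 * X ^ 3 - 348 * X ^ 2 - 80 * X - 5) ^ 4

def r : Polynomial ℚ :=
    -12500 * (X ^ 2 + 2 * X + 3) ^ 2 * (3 * X ^ 2 + 6 * X + 1) ^ 8 * (3 * X ^ 4 - 12 * X ^ 3 +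
    38 * X ^ 2 + 12 * X + 3) ^ 8

def q : Polynomial ℚ := p - r

/-- `F = p − t·q ∈ K[X]` where `K = ℚ(t)` and `t = RatFunc.X`. -/
def F : Polynomial (RatFunc ℚ) :=
  p.map (algebraMap ℚ (RatFunc ℚ)) - Polynomial.C RatFunc.X * q.map (algebraMap ℚ (RatFunc ℚ))

end

namespace LP

/-- evaluation of a coefficient list (constant term first) -/
def ev {S : Type*} [CommRing S] : List ℤ → S → S
  | [], _ => 0
  | a :: l, x => (a : S) + x * ev l x

def smul (c : ℤ) : List ℤ → List ℤ
  | [] => []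
  | b :: bs => (c * b) :: smul c bs

/-- a + c * b -/
def addmul (c : ℤ) : List ℤ → List ℤ → List ℤ
  | a, [] => a
  | [], b :: bs => (c * b) :: addmul c [] bs
  | a :: as, b :: bs => (a + c * b) :: addmul c as bs

/-- acc + a * b -/
def mulAdd (acc : List ℤ) : List ℤ → List ℤ → List ℤ
  | [], _ => acc
  | a :: as, b => match addmul a acc b with
    | [] => 0 :: mulAdd [] as b
    | c :: cs => c :: mulAdd cs as b

def mul (a b : List ℤ) : List ℤ := mulAdd [] a b

def pow (a : List ℤ) : ℕ → List ℤ
  | 0 => [1]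
  | n + 1 => mul (pow a n) a

def isZ : List ℤ → Bool
  | [] => true
  | a :: as => (a == 0) && isZ as

def der : List ℤ → ℤ → List ℤ
  | [], _ => []
  | a :: as, n => (n * a) :: der as (n + 1)

section
variable {S : Type*} [CommRing S]

@[simp] lemma ev_nil (x : S) : ev [] x = 0 := rfl
@[simp] lemma ev_cons (a : ℤ) (l : List ℤ) (x : S) : ev (a :: l) x = a + x * ev l x := rfl

lemma ev_addmul (c : ℤ) (a b : List ℤ) (x : S) : ev (addmul c a b) x = ev a x + c * ev b x := by
  induction b generalizing a with
  | nil => cases a <;> simp [addmul]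
  | cons b bs ih => cases a with
    | nil => simp [addmul, ih]; ring
    | cons a as => simp [addmul, ih]; ring

lemma ev_mulAdd (acc a b : List ℤ) (x : S) : ev (mulAdd acc a b) x = ev acc x + ev a x * ev b x := by
  induction a generalizing acc with
  | nil => simp [mulAdd]
  | cons a as ih =>
    have h := ev_addmul a acc b x
    rw [mulAdd]
    split <;> rename_i h' <;> rw [h'] at h <;> simp only [ev_cons, ev_nil, ih] at h ⊢
    · push_cast; linear_combination h
    · linear_combination h

lemma ev_mul (a b : List ℤ) (x : S) : ev (mul a b) x = ev a x * ev b x := by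
  simp [mul, ev_mulAdd]

lemma ev_pow (a : List ℤ) (n : ℕ) (x : S) : ev (pow a n) x = ev a x ^ n := by
  induction n with
  | zero => simp [pow]
  | succ n ih => simp [pow, ev_mul, ih, pow_succ]

lemma ev_isZ {a : List ℤ} (h : isZ a = true) (x : S) : ev a x = 0 := by
  induction a with
  | nil => rfl
  | cons a as ih =>
    simp only [isZ, Bool.and_eq_true, beq_iff_eq] at h
    simp [h.1, ih h.2]

lemma map_ev {T : Type*} [CommRing T] (f : S →+* T) (a : List ℤ) (x : S) :
    f (ev a x) = ev a (f x) := by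
  induction a with
  | nil => simp
  | cons a as ih => simp [ih]

end

/-- bivariate: list of coefficient lists; the outer variable is `x`. -/
def ev2 {S : Type*} [CommRing S] : List (List ℤ) → S → S → S
  | [], _, _ => 0
  | a :: l, x, y => ev a y + x * ev2 l x y

/-- a - c * b -/
def submul2 (c : List ℤ) : List (List ℤ) → List (List ℤ) → List (List ℤ)
  | a, [] => a
  | [], b :: bs => mul c b :: submul2 c [] bs
  | a :: as, b :: bs => mulAdd a c b :: submul2 c as bs

/-- w + b(x) p(y) -/
def addOuter (p : List ℤ) : List (List ℤ) → List ℤ → List (List ℤ)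
  | w, [] => w
  | [], b :: bs => smul b p :: addOuter p [] bs
  | w :: ws, b :: bs => addmul b w p :: addOuter p ws bs

def isZ2 : List (List ℤ) → Bool
  | [] => true
  | a :: as => isZ a && isZ2 as

section
variable {S : Type*} [CommRing S]

@[simp] lemma ev2_nil (x y : S) : ev2 [] x y = 0 := rfl
@[simp] lemma ev2_cons (a : List ℤ) (l : List (List ℤ)) (x y : S) :
  ev2 (a :: l) x y = ev a y + x * ev2 l x y := rfl

lemma ev_smul (c : ℤ) (b : List ℤ) (x : S) : ev (smul c b) x = c * ev b x := by
  induction b with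
  | nil => simp [smul]
  | cons b bs ih => simp [smul, ih]; ring

lemma ev2_submul2 (c : List ℤ) (a b : List (List ℤ)) (x y : S) :
    ev2 (submul2 c a b) x y = ev2 a x y + ev c y * ev2 b x y := by
  induction b generalizing a with
  | nil => cases a <;> simp [submul2]
  | cons b bs ih => cases a with
    | nil => simp [submul2, ih, ev_mul]; ring
    | cons a as => simp [submul2, ih, ev_mulAdd]; ring

lemma ev2_addOuter (p b : List ℤ) (w : List (List ℤ)) (x y : S) :
    ev2 (addOuter p w b) x y = ev2 w x y + ev b x * ev p y := by
  induction b generalizing w with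
  | nil => cases w <;> simp [addOuter]
  | cons b bs ih => cases w with
    | nil => simp [addOuter, ih, ev_smul]; ring
    | cons w ws => simp [addOuter, ih, ev_addmul]; ring

lemma ev2_isZ2 {a : List (List ℤ)} (h : isZ2 a = true) (x y : S) : ev2 a x y = 0 := by
  induction a with
  | nil => rfl
  | cons a as ih =>
    simp only [isZ2, Bool.and_eq_true] at h
    simp [ev_isZ h.1, ih h.2]

lemma map_ev2 {T : Type*} [CommRing T] (f : S →+* T) (a : List (List ℤ)) (x y : S) :
    f (ev2 a x y) = ev2 a (f x) (f y) := by
  induction a with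
  | nil => simp
  | cons a as ih => simp [ih, map_ev]
end

def gA : List ℤ := [-9, -18, 1]
def gB : List ℤ := [-135, -540, -774, -468, 1]
def gC : List ℤ := [513, 540, 162, 36, 1]
def gD : List ℤ := [-10935, -58320, -84564, -25920, 40446, 3888, -36, -96, 1]
def gE : List ℤ := [27, 6, 1]
def gF : List ℤ := [3, 6, 1]
def gG : List ℤ := [81, 108, 114, -12, 1]
def AL : List (List ℤ) := [[-315675954, -1182987666, -649952343, 2771996256, 5375348568, 3903611292, 1339585614, 201238992, 8306226, -1850202, 6561],
  [-1182987666, -1683605088, 11618008848, 37115839440, 44067796308, 24991111440, 7149337992, 848521008, 4920750, -8433072, 17496],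
  [-649952343, 11618008848, 68123177928, 132365655576, 119715509574, 53817573528, 12324821004, 955404072, -55146663, -15052392, 30132],
  [2771996256, 37115839440, 132365655576, 195671064960, 135656075808, 45048070944, 7432219152, 127090944, -87542208, -11559024, 22680],
  [5375348568, 44067796308, 119715509574, 135656075808, 66148579368, 13478690952, 1344115620, -140341248, -28466640, -2584764, 10566],
  [3903611292, 24991111440, 53817573528, 45048070944, 13478690952, 1225979712, -123755040, -70349472, -6219396, 6192, -2520],
  [1339585614, 7149337992, 12324821004, 7432219152, 1344115620, -123755040, -75876912, -11072592, -651042, 45144, 372],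
  [201238992, 848521008, 955404072, 127090944, -140341248, -70349472, -11072592, -551808, 44784, 3312, -24],
  [8306226, 4920750, -55146663, -87542208, -28466640, -6219396, -651042, 44784, 11670, -378, 1],
  [-1850202, -8433072, -15052392, -11559024, -2584764, 6192, 45144, 3312, -378, 0, 0],
  [6561, 17496, 30132, 22680, 10566, -2520, 372, -24, 1, 0, 0]]
/-! Kronecker packing -/

def evZ : List ℤ → ℤ → ℤ
  | [], _ => 0
  | a :: l, x => a + x * evZ l x

lemma evZ_eq (l : List ℤ) (x : ℤ) : evZ l x = ev l x := by
  induction l with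
  | nil => rfl
  | cons a l ih => simp [evZ, ih]

def pk (z : ℤ) : List (List ℤ) → List ℤ
  | [] => []
  | a :: l => evZ a z :: pk z l

/-- acc + a * b -/
def mulAdd2 (acc : List (List ℤ)) : List (List ℤ) → List (List ℤ) → List (List ℤ)
  | [], _ => acc
  | a :: as, b => match submul2 a acc b with
    | [] => [] :: mulAdd2 [] as b
    | c :: cs => c :: mulAdd2 cs as b

lemma ev2_mulAdd2 {S : Type*} [CommRing S] (acc a b : List (List ℤ)) (x y : S) :
    ev2 (mulAdd2 acc a b) x y = ev2 acc x y + ev2 a x y * ev2 b x y := by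
  induction a generalizing acc with
  | nil => simp [mulAdd2]
  | cons a as ih =>
    have h := ev2_submul2 a acc b x y
    rw [mulAdd2]
    split <;> rename_i h' <;> rw [h'] at h <;> simp only [ev2_cons, ev2_nil, ih, ev_nil] at h ⊢
    · linear_combination h
    · linear_combination h

lemma pk_submul2 (z : ℤ) (c : List ℤ) (a b : List (List ℤ)) :
    pk z (submul2 c a b) = addmul (evZ c z) (pk z a) (pk z b) := by
  induction b generalizing a with
  | nil => cases a <;> simp [submul2, pk, addmul]
  | cons b bs ih => cases a with
    | nil => simp [submul2, pk, addmul, evZ_eq, ev_mul, ih []]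
    | cons a as => simp [submul2, pk, addmul, evZ_eq, ev_mulAdd, ih]

lemma pk_mulAdd2 (z : ℤ) (acc a b : List (List ℤ)) :
    pk z (mulAdd2 acc a b) = mulAdd (pk z acc) (pk z a) (pk z b) := by
  induction a generalizing acc with
  | nil => simp [mulAdd2, mulAdd, pk]
  | cons a as ih =>
    have h := pk_submul2 z a acc b
    rw [mulAdd2, pk, mulAdd, ← h]
    cases submul2 a acc b with
    | nil => simp [pk, ih, evZ]
    | cons c cs => simp [pk, ih]

lemma pk_addOuter (z : ℤ) (p b : List ℤ) (w : List (List ℤ)) :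
    pk z (addOuter p w b) = addmul (evZ p z) (pk z w) b := by
  induction b generalizing w with
  | nil => cases w <;> simp [addOuter, addmul, pk]
  | cons b bs ih => cases w with
    | nil => simp [addOuter, ih [], evZ_eq, ev_smul, pk, addmul, mul_comm]
    | cons w ws => simp [addOuter, ih, evZ_eq, ev_addmul, pk, addmul, mul_comm]

/-- all coefficients bounded -/
def bd (M : ℤ) (l : List ℤ) : Prop := ∀ c ∈ l, |c| ≤ M
def bd2 (M : ℤ) (l : List (List ℤ)) : Prop := ∀ r ∈ l, bd M r

lemma bd_nil (M : ℤ) : bd M [] := by simp [bd]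
lemma bd_cons {M a : ℤ} {l : List ℤ} : bd M (a :: l) ↔ |a| ≤ M ∧ bd M l := by simp [bd]
lemma bd2_nil (M : ℤ) : bd2 M [] := by simp [bd2]
lemma bd2_cons {M : ℤ} {a : List ℤ} {l : List (List ℤ)} :
  bd2 M (a :: l) ↔ bd M a ∧ bd2 M l := by simp [bd2]
lemma bd.mono {M N : ℤ} {l : List ℤ} (h : bd M l) (hN : M ≤ N) : bd N l := fun c hc => (h c hc).trans hN
lemma bd2.mono {M N : ℤ} {l : List (List ℤ)} (h : bd2 M l) (hN : M ≤ N) : bd2 N l :=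
  fun c hc => (h c hc).mono hN

lemma bd_smul {c C M : ℤ} (hc : |c| ≤ C) {b : List ℤ} (hb : bd M b) : bd (C * M) (smul c b) := by
  induction b with
  | nil => exact bd_nil _
  | cons b bs ih =>
    rw [bd_cons] at hb
    refine bd_cons.2 ⟨?_, ih hb.2⟩
    rw [abs_mul]
    exact mul_le_mul hc hb.1 (abs_nonneg _) ((abs_nonneg _).trans hc)

lemma bd_addmul {c C Ma Mb : ℤ} (hc : |c| ≤ C) (h0 : 0 ≤ Ma) (h1 : 0 ≤ Mb) {a b : List ℤ}
    (ha : bd Ma a) (hb : bd Mb b) : bd (Ma + C * Mb) (addmul c a b) := by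
  have hC : 0 ≤ C := (abs_nonneg _).trans hc
  induction b generalizing a with
  | nil => 
    have : addmul c a [] = a := by cases a <;> rfl
    rw [this]
    exact ha.mono (by nlinarith)
  | cons b bs ih => 
    rw [bd_cons] at hb
    have hm : |c * b| ≤ C * Mb := by
      rw [abs_mul]; exact mul_le_mul hc hb.1 (abs_nonneg _) hC
    cases a with
    | nil => exact bd_cons.2 ⟨by linarith, ih ha hb.2⟩
    | cons a as =>
      rw [bd_cons] at ha
      refine bd_cons.2 ⟨?_, ih ha.2 hb.2⟩
      linarith [abs_add_le a (c * b)]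

lemma bd_mulAdd {C Ma Mb : ℤ} (n : ℕ) (h0 : 0 ≤ Ma) (h1 : 0 ≤ Mb) (hC : 0 ≤ C) {acc a b : List ℤ}
    (hl : a.length ≤ n) (hacc : bd Ma acc) (ha : bd C a)
    (hb : bd Mb b) : bd (Ma + n * (C * Mb)) (mulAdd acc a b) := by
  have hCM : 0 ≤ C * Mb := mul_nonneg hC h1
  induction a generalizing acc n Ma with
  | nil => exact hacc.mono (by have : (0:ℤ) ≤ n := by positivity
                               nlinarith)
  | cons a as ih =>
    rw [bd_cons] at ha
    obtain ⟨n, rfl⟩ : ∃ m, n = m + 1 := ⟨n - 1, by simp at hl; omega⟩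
    have hl' : as.length ≤ n := by simpa using hl
    have h := bd_addmul ha.1 h0 h1 hacc hb
    have e : (Ma + C * Mb) + n * (C * Mb) = Ma + ((n + 1 : ℕ) : ℤ) * (C * Mb) := by push_cast; ring
    have hn : 0 ≤ (n : ℤ) * (C * Mb) := by positivity
    rw [mulAdd, ← e]
    split <;> rename_i h' <;> rw [h'] at h
    · refine bd_cons.2 ⟨by simp; positivity, ?_⟩
      exact ih (Ma := Ma + C * Mb) n (by positivity) hl' (bd_nil _) ha.2
    · rw [bd_cons] at h
      exact bd_cons.2 ⟨by linarith, ih (Ma := Ma + C * Mb) n (by positivity) hl' h.2 ha.2⟩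

lemma bd2_submul2 {C Ma Mb : ℤ} (n : ℕ) (h0 : 0 ≤ Ma) (h1 : 0 ≤ Mb) (hC : 0 ≤ C) {c : List ℤ}
    {a b : List (List ℤ)} (hl : c.length ≤ n) (hc : bd C c)
    (ha : bd2 Ma a) (hb : bd2 Mb b) : bd2 (Ma + n * (C * Mb)) (submul2 c a b) := by
  have hCM : 0 ≤ C * Mb := mul_nonneg hC h1
  induction b generalizing a with
  | nil => 
    have : submul2 c a [] = a := by cases a <;> rfl
    rw [this]
    exact ha.mono (by have : 0 ≤ n * (C * Mb) := by positivity
                      linarith)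
  | cons b bs ih => 
    rw [bd2_cons] at hb
    cases a with
    | nil => exact bd2_cons.2 ⟨bd_mulAdd n h0 h1 hC hl (bd_nil _) hc hb.1, ih ha hb.2⟩
    | cons a as =>
      rw [bd2_cons] at ha
      exact bd2_cons.2 ⟨bd_mulAdd n h0 h1 hC hl ha.1 hc hb.1, ih ha.2 hb.2⟩

lemma bd2_mulAdd2 {C Ma Mb : ℤ} (k n : ℕ) (h0 : 0 ≤ Ma) (h1 : 0 ≤ Mb) (hC : 0 ≤ C)
    {acc a b : List (List ℤ)}
    (hl : a.length ≤ k) (hl' : ∀ r ∈ a, r.length ≤ n) (hacc : bd2 Ma acc) (ha : bd2 C a)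
    (hb : bd2 Mb b) : bd2 (Ma + k * (n * (C * Mb))) (mulAdd2 acc a b) := by
  have hCM : 0 ≤ n * (C * Mb) := by positivity
  induction a generalizing acc k Ma with
  | nil => exact hacc.mono (by have : 0 ≤ k * (n * (C * Mb)) := by positivity
                               linarith)
  | cons a as ih =>
    rw [bd2_cons] at ha
    obtain ⟨k, rfl⟩ : ∃ m, k = m + 1 := ⟨k - 1, by simp at hl; omega⟩
    have hk : as.length ≤ k := by simpa using hl
    have h := bd2_submul2 n h0 h1 hC (hl' a (by simp)) ha.1 hacc hb
    have e : (Ma + n * (C * Mb)) + k * (n * (C * Mb)) = Ma + ((k + 1 : ℕ) : ℤ) * (n * (C * Mb)) := by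
      push_cast; ring
    have hn : 0 ≤ (k : ℤ) * (n * (C * Mb)) := by positivity
    have hr : ∀ r ∈ as, r.length ≤ n := fun r hr => hl' r (by simp [hr])
    rw [mulAdd2, ← e]
    split <;> rename_i h' <;> rw [h'] at h
    · exact bd2_cons.2 ⟨bd_nil _,
        ih (Ma := Ma + n * (C * Mb)) k (by positivity) hk hr (bd2_nil _) ha.2⟩
    · rw [bd2_cons] at h
      exact bd2_cons.2 ⟨h.1.mono (by linarith),
        ih (Ma := Ma + n * (C * Mb)) k (by positivity) hk hr h.2 ha.2⟩

lemma bd2_addOuter {C M Mp : ℤ} (h0 : 0 ≤ M) (h1 : 0 ≤ Mp) (hC : 0 ≤ C) {p b : List ℤ}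
    {w : List (List ℤ)}
    (hb : bd C b) (hp : bd Mp p) (hw : bd2 M w) : bd2 (M + C * Mp) (addOuter p w b) := by
  have : 0 ≤ C * Mp := by positivity
  induction b generalizing w with
  | nil => 
    have : addOuter p w [] = w := by cases w <;> rfl
    rw [this]
    exact hw.mono (by linarith)
  | cons b bs ih => 
    rw [bd_cons] at hb
    cases w with
    | nil => exact bd2_cons.2 ⟨(bd_smul hb.1 hp).mono (by linarith), ih hb.2 hw⟩
    | cons w ws =>
      rw [bd2_cons] at hw
      exact bd2_cons.2 ⟨bd_addmul hb.1 h0 h1 hw.1 hp, ih hb.2 hw.2⟩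

lemma isZ_of_pk {M z : ℤ} (hz : M < z) {l : List ℤ} (hl : bd M l) (h : evZ l z = 0) :
    isZ l = true := by
  induction l with
  | nil => rfl
  | cons a l ih =>
    rw [bd_cons] at hl
    have h0 : 0 ≤ M := (abs_nonneg _).trans hl.1
    rw [evZ] at h
    have ha : a = 0 := by
      apply Int.eq_zero_of_abs_lt_dvd (m := z) ⟨-evZ l z, by linarith⟩
      linarith [hl.1]
    subst ha
    have : evZ l z = 0 := by
      rcases mul_eq_zero.1 (show z * evZ l z = 0 by linarith) with h | h
      · omega
      · exact h
    simp [isZ, ih hl.2 this]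

lemma isZ2_of_pk {M z : ℤ} (hz : M < z) {l : List (List ℤ)} (hl : bd2 M l) (h : isZ (pk z l) = true) :
    isZ2 l = true := by
  induction l with
  | nil => rfl
  | cons a l ih =>
    rw [bd2_cons] at hl
    simp only [pk, isZ, Bool.and_eq_true, beq_iff_eq] at h
    simp [isZ2, isZ_of_pk hz hl.1 h.1, ih hl.2 h.2]

/-- checker for `bd` -/
def bdC (M : ℕ) : List ℤ → Bool
  | [] => true
  | a :: l => Nat.ble a.natAbs M && bdC M l

lemma bd_of_bdC {M : ℕ} {l : List ℤ} (h : bdC M l = true) : bd M l := by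
  induction l with
  | nil => exact bd_nil _
  | cons a l ih =>
    simp only [bdC, Bool.and_eq_true, Nat.ble_eq] at h
    exact bd_cons.2 ⟨by rw [Int.abs_eq_natAbs]; exact_mod_cast h.1, ih h.2⟩

/-- checker for `bd2`, with lengths of rows -/
def bdC2 (M n : ℕ) : List (List ℤ) → Bool
  | [] => true
  | a :: l => bdC M a && Nat.ble a.length n && bdC2 M n l

lemma bd2_of_bdC2 {M n : ℕ} {l : List (List ℤ)} (h : bdC2 M n l = true) :
    bd2 M l ∧ ∀ r ∈ l, r.length ≤ n := by
  induction l with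
  | nil => exact ⟨bd2_nil _, by simp⟩
  | cons a l ih =>
    simp only [bdC2, Bool.and_eq_true, Nat.ble_eq] at h
    refine ⟨bd2_cons.2 ⟨bd_of_bdC h.1.1, (ih h.2).1⟩, ?_⟩
    intro r hr
    rcases List.mem_cons.1 hr with rfl | hr
    · exact h.1.2
    · exact (ih h.2).2 r hr

/-- balanced digits -/
def digs (z h : ℤ) : ℕ → ℤ → List ℤ
  | 0, _ => []
  | n + 1, w => ((w + h) % z - h) :: digs z h n ((w + h) / z)

/-- negated packed quotient, unpacked -/
def quo (z h : ℤ) (m : ℕ) (a : List ℤ) : ℕ → List ℤ → List (List ℤ)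
  | 0, _ => []
  | n + 1, w => digs z h m (-(w.headD 0 / a.headD 0)) ::
      quo z h m a n (addmul (-(w.headD 0 / a.headD 0)) w a).tail

def PL : List ℤ := mul (mul (pow gA 2) gB) (mul (pow gC 4) (pow gD 4))
def RL : List ℤ := mul (pow gE 2) (mul (pow gF 8) (pow gG 8))

/-- (X - Y) A -/
def DA : List (List ℤ) := submul2 [0, -1] ([] :: AL) AL

def zz : ℤ := (2 ^ 512 : ℕ)

def pT : List ℤ := addmul (evZ RL zz) (addmul (evZ PL zz) [] (smul (-1) RL)) PL
def BN : List (List ℤ) := quo zz (2 ^ 511 : ℕ) 46 (pk zz DA) 46 pT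

set_option maxRecDepth 100000 in
lemma BN_ok : (isZ (mulAdd pT (pk zz BN) (pk zz DA)) && Nat.ble BN.length 46 && bdC2 (2 ^ 200) 46 BN
   && bdC2 (2 ^ 100) 100 DA && bdC (2 ^ 200) RL && bdC (2 ^ 200) PL) = true := by decide +kernel

lemma ev2_DA {S : Type*} [CommRing S] (x y : S) : ev2 DA x y = (x - y) * ev2 AL x y := by
  rw [DA, ev2_submul2]; simp; ring

set_option exponentiation.threshold 1000 in
lemma main_id : ∃ BL : List (List ℤ), ∀ (S : Type) [CommRing S] (x y : S),
    ev PL x * ev RL y - ev RL x * ev PL y = (x - y) * ev2 AL x y * ev2 BL x y := by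
  have h := BN_ok
  simp only [Bool.and_eq_true, Nat.ble_eq] at h
  obtain ⟨⟨⟨⟨⟨h1, h2⟩, h3⟩, h4⟩, h5⟩, h6⟩ := h
  have h3 := bd2_of_bdC2 h3
  have h4 := (bd2_of_bdC2 h4).1
  have h5 := bd_of_bdC h5
  have h6 := bd_of_bdC h6
  have b0 := bd2_addOuter (M := 0) (w := []) le_rfl (by positivity) (by positivity)
    ((bd_smul (C := 1) (c := -1) (by simp) h5)) h6 (bd2_nil _)
  have b1 := bd2_addOuter (by positivity) (by positivity) (by positivity) h6 h5 b0
  have b2 := bd2_mulAdd2 46 46 (by positivity) (by positivity) (by positivity) h2 h3.2 b1 h3.1 h4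
  have hz := isZ2_of_pk (z := zz) (by rw [zz]; norm_num) b2 (by
    rw [pk_mulAdd2, pk_addOuter, pk_addOuter]; exact h1)
  refine ⟨mulAdd2 [] [[-1]] BN, fun S _ x y => ?_⟩
  have e := ev2_isZ2 hz x y
  rw [ev2_mulAdd2, ev2_addOuter, ev2_addOuter, ev_smul, ev2_DA] at e
  rw [ev2_mulAdd2]
  simp at e ⊢
  linear_combination e

attribute [irreducible] PL RL AL


end LP

namespace LP
def rows : List ℕ := [6757873979756864, 10135308989694084, 38703359065063682, 38315927573381136, 1127001576453192, 11312084873126016, 27162928092284945, 22668768673009698, 1697680334020613, 45671515215106048, 36198396704423952, 4820276185727040, 281474978497169, 18298078146855216, 9170012875264264, 30685171049169920, 2814857409731586, 44565723910144, 36030172079745026, 37155277300043808, 18054258372907012, 14074182627360788, 831076207496, 13263462992436, 9008437347749120, 45362626389082113, 18102363759968267, 3404229734826560, 13590514013118472, 703827305857025, 6896216403223040, 17645375062034, 145135776636928, 857895021838410, 20347564333746176, 36103703396286816, 19141261604765696, 283777769144456, 70446061192225, 20959713689668, 2890066364203152, 40286793246211, 4506945416380416, 26214532480, 5348576662144032,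 1831786406610984, 1549538636595712, 105559021864132, 88106992711684, 18068283708211968, 4609221597888786, 1117899554861, 37176688502638721, 320914018, 36591832939929792, 22518032530933260]
def ord1 : List ℕ := [4, 14, 3, 22, 31, 20, 33, 35, 38, 42]
def ord2 : List ℕ := [2, 7, 5, 9, 10, 11, 13, 15, 16, 17, 18, 19, 21, 23, 24, 25, 26, 27, 28, 29, 30, 32, 34, 36, 37, 39, 40, 41, 43, 44, 45, 46, 47, 48, 49, 50, 51, 52, 53, 54, 55]
def cs : List ℕ := [30, 34, 38, 42, 80, 85, 110, 146, 220, 269, 284, 285, 294, 400, 421, 447, 486, 637, 663, 748, 936, 945, 965, 973, 983, 1018, 1023, 1066, 1079, 1092, 1152, 1179, 1207, 1253, 1300, 1357, 1369, 1402, 1408, 1412, 1579, 1603, 1655, 1681, 1789, 1809, 1830, 1849, 1850, 1906, 1918, 1959, 1991, 2006, 2050, 2130]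

def row (i : ℕ) : ℕ := rows.getD i 0
def adj (i j : Fin 56) : Bool := (row i).testBit j
def nb (i : Fin 56) : Finset (Fin 56) := Finset.univ.filter fun j => adj i j = true

lemma mem_nb {i j : Fin 56} : j ∈ nb i ↔ adj i j = true := by simp [nb]

lemma card_nb (i : Fin 56) : (nb i).card = 10 := by revert i; decide +kernel

def uniq (m w : ℕ) : Bool :=
  (List.range 56).all fun x => x == w || ((row x &&& m) != (row w &&& m))
def chain : ℕ → List ℕ → ℕ
  | m, [] => m
  | m, w :: ws => chain (m ||| (1 <<< w)) ws
def chainOK : ℕ → List ℕ → Bool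
  | _, [] => true
  | m, w :: ws => Nat.blt w 56 && uniq m w && chainOK (m ||| (1 <<< w)) ws

open Equiv

/-- `σ` fixes all the points in the mask -/
def Fx (σ : Perm (Fin 56)) (m : ℕ) : Prop :=
  ∀ k : ℕ, m.testBit k = true → ∃ h : k < 56, σ ⟨k, h⟩ = ⟨k, h⟩

def Pres (σ : Perm (Fin 56)) : Prop := ∀ i j, adj (σ i) (σ j) = adj i j

lemma Fx.pat {σ : Perm (Fin 56)} (hσ : Pres σ) {m : ℕ} (h : Fx σ m) (w : Fin 56) :
    row (σ w) &&& m = row w &&& m := by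
  apply Nat.eq_of_testBit_eq
  intro k
  rw [Nat.testBit_land, Nat.testBit_land]
  by_cases hk : m.testBit k = true
  · obtain ⟨hk', e⟩ := h k hk
    have := hσ w ⟨k, hk'⟩
    rw [e] at this
    simp only [adj] at this
    rw [this]
  · simp [hk]

lemma Fx.insert {σ : Perm (Fin 56)} {m : ℕ} (h : Fx σ m) (w : ℕ) (hw : w < 56)
    (hf : σ ⟨w, hw⟩ = ⟨w, hw⟩) : Fx σ (m ||| (1 <<< w)) := by
  intro k hk
  rw [Nat.testBit_lor, Bool.or_eq_true] at hk
  rcases hk with hk | hk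
  · exact h k hk
  · rw [Nat.one_shiftLeft, Nat.testBit_two_pow] at hk
    obtain rfl : w = k := by simpa using hk
    exact ⟨hw, hf⟩

lemma Fx.chain {σ : Perm (Fin 56)} (hσ : Pres σ) {m : ℕ} (h : Fx σ m) (l : List ℕ)
    (hl : chainOK m l = true) : Fx σ (chain m l) := by
  induction l generalizing m with
  | nil => exact h
  | cons w ws ih =>
    simp only [chainOK, Bool.and_eq_true, uniq, List.all_eq_true, List.mem_range] at hl
    obtain ⟨⟨h1, h2⟩, h3⟩ := hl
    have hw : w < 56 := by simpa [Nat.blt_eq] using h1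
    refine ih (h.insert w hw ?_) h3
    have a := h2 (σ ⟨w, hw⟩) (σ ⟨w, hw⟩).2
    rw [h.pat hσ ⟨w, hw⟩] at a
    ext
    simpa using a

lemma chk1 : chainOK 0x1141 ord1 = true := by decide +kernel
lemma chk2 : chainOK (chain 0x1141 ord1 ||| (1 <<< 1)) ord2 = true := by decide +kernel
lemma chk3 : chain (chain 0x1141 ord1 ||| (1 <<< 1)) ord2 = 2 ^ 56 - 1 := by decide +kernel
lemma chk4 : ∀ x : Fin 56, row x &&& chain 0x1141 ord1 = row 1 &&& chain 0x1141 ord1 → x = 1 ∨ x = 30 := by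
  decide +kernel

lemma fx_base {σ : Perm (Fin 56)} (h0 : σ 0 = 0) (h1 : σ 6 = 6) (h2 : σ 8 = 8) (h3 : σ 12 = 12) :
    Fx σ 0x1141 := by
  have : Fx σ 0 := by intro k hk; simp at hk
  exact (((this.insert 0 (by norm_num) h0).insert 6 (by norm_num) h1).insert 8
    (by norm_num) h2).insert 12 (by norm_num) h3

lemma base_im {σ : Perm (Fin 56)} (hσ : Pres σ) (h0 : σ 0 = 0) (h1 : σ 6 = 6) (h2 : σ 8 = 8)
    (h3 : σ 12 = 12) : σ 1 = 1 ∨ σ 1 = 30 :=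
  chk4 _ (((fx_base h0 h1 h2 h3).chain hσ _ chk1).pat hσ 1)

lemma base_triv {σ : Perm (Fin 56)} (hσ : Pres σ) (h0 : σ 0 = 0) (h1 : σ 6 = 6) (h2 : σ 8 = 8)
    (h3 : σ 12 = 12) (h4 : σ 1 = 1) : σ = 1 := by
  have := (((fx_base h0 h1 h2 h3).chain hσ _ chk1).insert 1 (by norm_num) h4).chain hσ _ chk2
  rw [chk3] at this
  ext i
  obtain ⟨h, e⟩ := this i (by rw [Nat.testBit_two_pow_sub_one]; simp)
  rw [Equiv.Perm.one_apply, show (i : Fin 56) = ⟨i, h⟩ from rfl, e]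

lemma card_chain {α : Type*} [Finite α] (H : Subgroup (Perm α)) (x : α) (O : Finset α)
    (h1 : ∀ h ∈ H, h x ∈ O) (h2 : ∀ y ∈ O, ∃ h ∈ H, h x = y) :
    Nat.card H = O.card * Nat.card ↥(H ⊓ MulAction.stabilizer (Perm α) x) := by
  classical
  have e := Nat.card_congr (MulAction.orbitProdStabilizerEquivGroup H x)
  rw [Nat.card_prod] at e
  rw [← e]
  congr 1
  · have : MulAction.orbit H x = (O : Set α) := by
      ext y
      constructor
      · rintro ⟨h, rfl⟩
        exact h1 h.1 h.2
      · intro hy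
        obtain ⟨h, hh, e⟩ := h2 y hy
        exact ⟨⟨h, hh⟩, e⟩
    rw [this]; simp
  · refine Nat.card_congr ⟨fun g => ⟨g.1.1, g.1.2, g.2⟩, fun g => ⟨⟨g.1, g.2.1⟩, g.2.2⟩, ?_, ?_⟩ <;>
      intro g <;> rfl

theorem comb (H : Subgroup (Perm (Fin 56))) (hP : ∀ h ∈ H, Pres h)
    (htr : ∀ i j, ∃ h ∈ H, h i = j)
    (hρ : ∃ h ∈ H, ∃ i, h i = i ∧ ∀ j ∈ nb i, h j ≠ j)
    (hτ : ∃ h ∈ H, ∃ i w b c, h i = i ∧ w ∈ nb i ∧ h w = w ∧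
      (∀ j ∈ nb i, h (h j) = j → j = w) ∧ b ∈ nb i ∧ b ≠ w ∧ h (h (h b)) = b ∧ h (h (h c)) ≠ c)
    (hσ : ∃ h ∈ H, ∃ i u v, h i = i ∧ u ∈ nb i ∧ v ∈ nb i ∧ u ≠ v ∧ h u = u ∧ h v = v ∧
      ∀ j ∈ nb i, j ≠ u → j ≠ v → (h ^ 4) j ≠ j ∧ (h ^ 8) j = j) :
    Nat.card H = 80640 := by
  classical
  have inv : ∀ {h : Perm (Fin 56)}, h ∈ H → ∀ {x y}, h x = y → h⁻¹ y = x := by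
    rintro h hh x y rfl; simp
  have inv' : ∀ {h : Perm (Fin 56)} {x y}, h x = y → Equiv.symm h y = x := by
    rintro h x y rfl; simp
  have nbm : ∀ {h}, h ∈ H → ∀ {i j}, j ∈ nb i → h j ∈ nb (h i) := by
    intro h hh i j hj
    rw [mem_nb] at hj ⊢
    rw [hP h hh, hj]
  have nb0 : ∀ {h}, h ∈ H → h 0 = 0 → ∀ {j}, j ∈ nb 0 → h j ∈ nb 0 := by
    intro h hh e j hj
    have := nbm hh hj
    rwa [e] at this
  -- conjugate everything to 0
  obtain ⟨ρ, hρH, hρ0, hρn⟩ : ∃ h ∈ H, h 0 = 0 ∧ ∀ j ∈ nb 0, h j ≠ j := by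
    obtain ⟨h, hh, i, hi, hn⟩ := hρ
    obtain ⟨g, hg, e0⟩ := htr i 0
    refine ⟨g * h * g⁻¹, H.mul_mem (H.mul_mem hg hh) (H.inv_mem hg), by rw [← e0]; simp [hi], ?_⟩
    intro j hj e
    have hj' := nbm (H.inv_mem hg) hj
    rw [← e0] at hj'
    refine hn (g⁻¹ j) (by simpa using hj') ?_
    simp only [Perm.mul_apply] at e
    exact (inv hg e).symm
  obtain ⟨τ, hτH, w, b, c, hτ0, hw, hτw, hτ2, hb, hbw, hτb, hτc⟩ : ∃ h ∈ H, ∃ w b c, h 0 = 0 ∧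
      w ∈ nb 0 ∧ h w = w ∧
      (∀ j ∈ nb 0, h (h j) = j → j = w) ∧ b ∈ nb 0 ∧ b ≠ w ∧ h (h (h b)) = b ∧ h (h (h c)) ≠ c := by
    obtain ⟨h, hh, i, w, b, c, hi, hw, h1, h2, h3, h4, h5, h6⟩ := hτ
    obtain ⟨g, hg, e0⟩ := htr i 0
    refine ⟨g * h * g⁻¹, H.mul_mem (H.mul_mem hg hh) (H.inv_mem hg), g w, g b, g c, ?_, ?_, ?_, ?_,
      ?_, ?_, ?_, ?_⟩
    · rw [← e0]; simp [hi]
    · rw [← e0]; exact nbm hg hw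
    · simp [h1]
    · intro j hj e
      have hj' := nbm (H.inv_mem hg) hj
      rw [← e0] at hj'
      have := h2 (g⁻¹ j) (by simpa using hj') (by
        have e2 : g (h (h (g⁻¹ j))) = j := by simpa using e
        exact (inv hg e2).symm)
      rw [← this]; simp
    · rw [← e0]; exact nbm hg h3
    · simpa using h4
    · simp [h5]
    · simpa using h6
  obtain ⟨σ, hσH, u, v, hσ0, hu, hv, huv, hσu, hσv, hσ8⟩ : ∃ h ∈ H, ∃ u v, h 0 = 0 ∧ u ∈ nb 0 ∧
      v ∈ nb 0 ∧ u ≠ v ∧ h u = u ∧ h v = v ∧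
      ∀ j ∈ nb 0, j ≠ u → j ≠ v → (h ^ 4) j ≠ j ∧ (h ^ 8) j = j := by
    obtain ⟨h, hh, i, u, v, hi, h1, h2, h3, h4, h5, h6⟩ := hσ
    obtain ⟨g, hg, e0⟩ := htr i 0
    refine ⟨g * h * g⁻¹, H.mul_mem (H.mul_mem hg hh) (H.inv_mem hg), g u, g v, ?_, ?_, ?_, ?_,
      ?_, ?_, ?_⟩
    · rw [← e0]; simp [hi]
    · rw [← e0]; exact nbm hg h1
    · rw [← e0]; exact nbm hg h2
    · simpa using h3
    · simp [h4]
    · simp [h5]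
    · intro j hj hju hjv
      have hj' := nbm (H.inv_mem hg) hj
      rw [← e0] at hj'
      obtain ⟨k1, k2⟩ := h6 (g⁻¹ j) (by simpa using hj') (fun e => hju (by rw [← e]; simp))
        (fun e => hjv (by rw [← e]; simp))
      rw [conj_pow, conj_pow]
      refine ⟨fun e => k1 ?_, ?_⟩
      · simp only [Perm.mul_apply] at e
        exact (inv hg e).symm
      · simp only [Perm.mul_apply, k2]; simp
  -- σ is transitive on the 8 others
  have hσp : ∀ n : ℕ, σ ^ n ∈ H := fun n => H.pow_mem hσH n
  have σt : ∀ x ∈ nb 0, x ≠ u → x ≠ v → ∀ y ∈ nb 0, y ≠ u → y ≠ v → ∃ n : ℕ, (σ ^ n) x = y := by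
    intro x hx hxu hxv y hy hyu hyv
    have fixn : ∀ (n : ℕ) (z : Fin 56), σ z = z → (σ ^ n) z = z := fun n z hz => by
      induction n with
      | zero => rfl
      | succ n ih => rw [pow_succ, Perm.mul_apply, hz, ih]
    have himg : (Finset.range 8).image (fun n => (σ ^ n) x) = (nb 0 \ {u, v}) := by
      apply Finset.eq_of_subset_of_card_le
      · intro z hz
        obtain ⟨n, -, rfl⟩ := Finset.mem_image.1 hz
        simp only [Finset.mem_sdiff, Finset.mem_insert, Finset.mem_singleton, not_or]
        refine ⟨nb0 (hσp n) (fixn n 0 hσ0) hx, fun e => hxu ?_, fun e => hxv ?_⟩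
        · exact (σ ^ n).injective (e.trans (fixn n u hσu).symm)
        · exact (σ ^ n).injective (e.trans (fixn n v hσv).symm)
      · rw [Finset.card_sdiff_of_subset (by simp [Finset.insert_subset_iff, hu, hv]), card_nb, Finset.card_pair huv,
          Finset.card_image_of_injOn]
        · simp
        · have key : ∀ d : ℕ, 0 < d → d < 8 → (σ ^ d) x ≠ x := by
            intro d hd hd8 e
            obtain ⟨k1, k2⟩ := hσ8 x hx hxu hxv
            have e' : ∀ k : ℕ, (σ ^ (d * k)) x = x := by
              intro k
              induction k with
              | zero => simp
              | succ k ih => rw [Nat.mul_succ, pow_add, Perm.mul_apply, e, ih]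
            have e'' : ∀ k : ℕ, (σ ^ (8 * k)) x = x := by
              intro k
              induction k with
              | zero => simp
              | succ k ih => rw [Nat.mul_succ, pow_add, Perm.mul_apply, k2, ih]
            obtain ⟨a, m, ham⟩ : ∃ a m : ℕ, d * a = 4 + 8 * m := by
              interval_cases d
              · exact ⟨4, 0, rfl⟩
              · exact ⟨2, 0, rfl⟩
              · exact ⟨4, 1, rfl⟩
              · exact ⟨1, 0, rfl⟩
              · exact ⟨4, 2, rfl⟩
              · exact ⟨2, 1, rfl⟩
              · exact ⟨4, 3, rfl⟩
            apply k1
            have := e' a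
            rwa [ham, pow_add, Perm.mul_apply, e''] at this
          intro a ha b hb hab
          simp only [Finset.coe_range, Set.mem_Iio] at ha hb
          rcases lt_trichotomy a b with h | h | h
          · exfalso
            apply key (b - a) (by omega) (by omega)
            apply (σ ^ a).injective
            rw [← Perm.mul_apply, ← pow_add, show a + (b - a) = b by omega]; exact hab.symm
          · exact h
          · exfalso
            apply key (a - b) (by omega) (by omega)
            apply (σ ^ b).injective
            rw [← Perm.mul_apply, ← pow_add, show b + (a - b) = a by omega]; exact hab
    have : y ∈ (Finset.range 8).image (fun n => (σ ^ n) x) := by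
      rw [himg]; simp [hy, hyu, hyv]
    obtain ⟨n, -, e⟩ := Finset.mem_image.1 this
    exact ⟨n, e⟩
  have fixn : ∀ (n : ℕ) (z : Fin 56), σ z = z → (σ ^ n) z = z := fun n z hz => by
    induction n with
    | zero => rfl
    | succ n ih => rw [pow_succ, Perm.mul_apply, hz, ih]
  -- some other neighbour
  obtain ⟨x0, hx0, hx0u, hx0v⟩ : ∃ x ∈ nb 0, x ≠ u ∧ x ≠ v := by
    have : (nb 0 \ {u, v}).Nonempty := by
      rw [← Finset.card_pos, Finset.card_sdiff_of_subset (by simp [Finset.insert_subset_iff, hu, hv]), card_nb,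
        Finset.card_pair huv]; norm_num
    obtain ⟨x, hx⟩ := this
    simp only [Finset.mem_sdiff, Finset.mem_insert, Finset.mem_singleton, not_or] at hx
    exact ⟨x, hx.1, hx.2⟩
  -- transitivity on neighbours
  have mv : ∀ z ∈ nb 0, z = u ∨ z = v → ∃ h ∈ H, h 0 = 0 ∧ h z ≠ u ∧ h z ≠ v := by
    intro z hz hzuv
    by_contra! hcon
    have r1 := hρn z hz
    have r2 := hcon ρ hρH hρ0
    have t1 := hcon τ hτH hτ0
    have t2 := hcon (τ * τ) (H.mul_mem hτH hτH) (by simp [hτ0])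
    have t3 := hcon (ρ) hρH hρ0
    have t4 := hcon (τ * ρ) (H.mul_mem hτH hρH) (by simp [hτ0, hρ0])
    have t5 := hcon (τ * τ * ρ) (H.mul_mem (H.mul_mem hτH hτH) hρH) (by simp [hτ0, hρ0])
    simp only [Perm.mul_apply] at t1 t2 t3 t4 t5
    -- the pair {u, v} is stable under τ
    have q1 := hτ2 z hz
    have q2 := hτ2 (ρ z) (nb0 hρH hρ0 hz)
    have ne1 : τ (ρ z) ≠ τ z := fun e => r1 (τ.injective e)
    have ne2 : τ (τ (ρ z)) ≠ τ (τ z) := fun e => ne1 (τ.injective e)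
    have s1 : τ (τ z) ≠ τ z → τ z ≠ z := fun h e => h (by rw [e, e])
    by_cases hz1 : τ z = z
    · have a1 := q1 (by rw [hz1, hz1])
      have : τ (τ (ρ z)) = ρ z := by grind
      have a2 := q2 this
      exact r1 (a2.trans a1.symm)
    · have : τ (τ z) = z := by
        have : τ (τ z) ≠ τ z := fun e => hz1 (τ.injective e)
        grind
      have a1 := q1 this
      rw [a1] at hz1
      exact hz1 hτw
  have T1a : ∀ z ∈ nb 0, ∃ h ∈ H, h 0 = 0 ∧ h z = x0 := by
    intro z hz
    by_cases hzuv : z = u ∨ z = v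
    · obtain ⟨h, hh, h0, h1, h2⟩ := mv z hz hzuv
      obtain ⟨n, hn⟩ := σt (h z) (nb0 hh h0 hz) h1 h2 x0 hx0 hx0u hx0v
      exact ⟨σ ^ n * h, H.mul_mem (hσp n) hh, by simp [h0, fixn n 0 hσ0], hn⟩
    · rw [not_or] at hzuv
      obtain ⟨n, hn⟩ := σt z hz hzuv.1 hzuv.2 x0 hx0 hx0u hx0v
      exact ⟨σ ^ n, hσp n, fixn n 0 hσ0, hn⟩
  have T1 : ∀ y ∈ nb 0, ∀ z ∈ nb 0, ∃ h ∈ H, h 0 = 0 ∧ h y = z := by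
    intro y hy z hz
    obtain ⟨h, hh, h0, h1⟩ := T1a y hy
    obtain ⟨k, hk, k0, k1⟩ := T1a z hz
    exact ⟨k⁻¹ * h, H.mul_mem (H.inv_mem hk) hh, by simp [h0, inv' k0], by simp [h1, inv' k1]⟩
  -- 2-transitivity
  have T2u : ∀ y ∈ nb 0, y ≠ u → ∃ h ∈ H, h 0 = 0 ∧ h u = u ∧ h y = x0 := by
    intro y hy hyu
    by_cases hyv : y = v
    · subst hyv
      obtain ⟨g, hg, g0, g1⟩ := T1 w hw u hu
      set t := g * τ * g⁻¹ with ht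
      have htH : t ∈ H := H.mul_mem (H.mul_mem hg hτH) (H.inv_mem hg)
      have t0 : t 0 = 0 := by simp [ht, inv' g0, hτ0, g0]
      have tu : t u = u := by simp [ht, inv' g1, hτw, g1]
      have hty : t y ≠ y := by
        intro e
        simp only [ht, Perm.mul_apply] at e
        have e1 : τ (g⁻¹ y) = g⁻¹ y := (inv hg e).symm
        have := hτ2 (g⁻¹ y) (nb0 (H.inv_mem hg) (inv hg g0) hy) (by rw [e1, e1])
        apply hyu
        rw [← g1, ← this]; simp
      have htu : t y ≠ u := fun e => hyu (t.injective (e.trans tu.symm))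
      obtain ⟨n, hn⟩ := σt (t y) (nb0 htH t0 hy) htu hty x0 hx0 hx0u hx0v
      exact ⟨σ ^ n * t, H.mul_mem (hσp n) htH, by simp [t0, fixn n 0 hσ0],
        by simp [tu, fixn n u hσu], hn⟩
    · obtain ⟨n, hn⟩ := σt y hy hyu hyv x0 hx0 hx0u hx0v
      exact ⟨σ ^ n, hσp n, fixn n 0 hσ0, fixn n u hσu, hn⟩
  -- every triple can be moved to (u, v, x0)
  have T3 : ∀ a ∈ nb 0, ∀ b ∈ nb 0, ∀ c ∈ nb 0, a ≠ b → a ≠ c → b ≠ c →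
      ∃ h ∈ H, h 0 = 0 ∧ h a = u ∧ h b = v ∧ h c = x0 := by
    intro a ha b hb c hc hab hac hbc
    obtain ⟨g, hg, g0, g1⟩ := T1 a ha u hu
    obtain ⟨k, hk, k0, k1, k2⟩ := T2u (g b) (nb0 hg g0 hb) (fun e => hab (g.injective (g1.trans e.symm)))
    obtain ⟨m, hm, m0, m1, m2⟩ := T2u v hv huv.symm
    set q := m⁻¹ * k * g with hq
    have hqH : q ∈ H := H.mul_mem (H.mul_mem (H.inv_mem hm) hk) hg
    have q0 : q 0 = 0 := by simp [hq, g0, k0, inv' m0]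
    have q1 : q a = u := by simp [hq, g1, k1, inv' m1]
    have q2 : q b = v := by simp [hq, k2, inv' m2]
    obtain ⟨n, hn⟩ := σt (q c) (nb0 hqH q0 hc) (fun e => hac (q.injective (q1.trans e.symm)))
      (fun e => hbc (q.injective (q2.trans e.symm))) x0 hx0 hx0u hx0v
    exact ⟨σ ^ n * q, H.mul_mem (hσp n) hqH, by simp [q0, fixn n 0 hσ0],
      by simp [q1, fixn n u hσu], by simp [q2, fixn n v hσv], hn⟩
  have T3' : ∀ a ∈ nb 0, ∀ b ∈ nb 0, ∀ c ∈ nb 0, a ≠ b → a ≠ c → b ≠ c →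
      ∀ a' ∈ nb 0, ∀ b' ∈ nb 0, ∀ c' ∈ nb 0, a' ≠ b' → a' ≠ c' → b' ≠ c' →
      ∃ h ∈ H, h 0 = 0 ∧ h a = a' ∧ h b = b' ∧ h c = c' := by
    intro a ha b hb c hc hab hac hbc a' ha' b' hb' c' hc' hab' hac' hbc'
    obtain ⟨h, hh, h0, h1, h2, h3⟩ := T3 a ha b hb c hc hab hac hbc
    obtain ⟨k, hk, k0, k1, k2, k3⟩ := T3 a' ha' b' hb' c' hc' hab' hac' hbc'
    exact ⟨k⁻¹ * h, H.mul_mem (H.inv_mem hk) hh, by simp [h0, inv' k0], by simp [h1, inv' k1],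
      by simp [h2, inv' k2], by simp [h3, inv' k3]⟩
  have n6 : (6 : Fin 56) ∈ nb 0 := by rw [mem_nb]; decide +kernel
  have n8 : (8 : Fin 56) ∈ nb 0 := by rw [mem_nb]; decide +kernel
  have n12 : (12 : Fin 56) ∈ nb 0 := by rw [mem_nb]; decide +kernel
  -- the nontrivial element of the stabilizer
  obtain ⟨π, hπ, π0, π1, π2, π3, π4⟩ : ∃ h ∈ H, h 0 = 0 ∧ h 6 = 6 ∧ h 8 = 8 ∧ h 12 = 12 ∧ h ≠ 1 := by
    have hb' : τ b ≠ b := fun e => hbw (hτ2 b hb (by rw [e, e]))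
    have hb'' : τ b ≠ w := fun e => hbw (τ.injective (e.trans hτw.symm))
    obtain ⟨g, hg, g0, g1, g2, g3⟩ := T3' w hw b hb (τ b) (nb0 hτH hτ0 hb) hbw.symm hb''.symm hb'.symm
      6 n6 8 n8 12 n12 (by decide) (by decide) (by decide)
    refine ⟨g * (τ * τ * τ) * g⁻¹, H.mul_mem (H.mul_mem hg (H.mul_mem (H.mul_mem hτH hτH) hτH))
      (H.inv_mem hg), ?_, ?_, ?_, ?_, ?_⟩
    · simp [inv' g0, hτ0, g0]
    · simp [inv' g1, hτw, g1]
    · simp [inv' g2, hτb, g2]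
    · simp [inv' g3, hτb, g3]
    · intro e
      apply hτc
      have := congrArg (fun f : Perm (Fin 56) => g⁻¹ (f (g c))) e
      simpa using this
  have π5 : π 1 = 30 := by
    rcases base_im (hP π hπ) π0 π1 π2 π3 with h | h
    · exact absurd (base_triv (hP π hπ) π0 π1 π2 π3 h) π4
    · exact h
  -- counting
  have c0 := card_chain H 0 Finset.univ (fun _ _ => Finset.mem_univ _) (fun y _ => htr 0 y)
  set H0 := H ⊓ MulAction.stabilizer (Perm (Fin 56)) (0 : Fin 56) with hH0
  have m0 : ∀ h, h ∈ H0 ↔ h ∈ H ∧ h 0 = 0 := fun h => Iff.rfl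
  have c1 := card_chain H0 6 (nb 0) (fun h hh => nb0 hh.1 hh.2 n6) (fun y hy => by
    obtain ⟨h, hh, h0, h1⟩ := T1 6 n6 y hy
    exact ⟨h, ⟨hh, h0⟩, h1⟩)
  set H1 := H0 ⊓ MulAction.stabilizer (Perm (Fin 56)) (6 : Fin 56) with hH1
  have m1 : ∀ h, h ∈ H1 ↔ h ∈ H0 ∧ h 6 = 6 := fun h => Iff.rfl
  have ex : ∀ y ∈ nb 0, y ≠ 6 → ∃ z ∈ nb 0, z ≠ 6 ∧ z ≠ y := by
    intro y hy hy6
    by_cases h : y = 8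
    · exact ⟨12, n12, by decide, by rw [h]; decide⟩
    · exact ⟨8, n8, by decide, Ne.symm h⟩
  have c2 := card_chain H1 8 (nb 0 \ {6}) (fun h hh => by
    simp only [Finset.mem_sdiff, Finset.mem_singleton]
    refine ⟨nb0 hh.1.1 hh.1.2 n8, fun e => ?_⟩
    have := h.injective (e.trans (((m1 h).1 hh).2).symm)
    revert this; decide) (fun y hy => by
    simp only [Finset.mem_sdiff, Finset.mem_singleton] at hy
    obtain ⟨z, hz, hz6, hzy⟩ := ex y hy.1 hy.2
    obtain ⟨h, hh, h0, h1, h2, -⟩ := T3' 6 n6 8 n8 12 n12 (by decide) (by decide) (by decide)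
      6 n6 y hy.1 z hz (Ne.symm hy.2) hz6.symm hzy.symm
    exact ⟨h, ⟨⟨hh, h0⟩, h1⟩, h2⟩)
  set H2 := H1 ⊓ MulAction.stabilizer (Perm (Fin 56)) (8 : Fin 56) with hH2
  have m2 : ∀ h, h ∈ H2 ↔ h ∈ H1 ∧ h 8 = 8 := fun h => Iff.rfl
  have c3 := card_chain H2 12 (nb 0 \ {6, 8}) (fun h hh => by
    simp only [Finset.mem_sdiff, Finset.mem_insert, Finset.mem_singleton, not_or]
    refine ⟨nb0 hh.1.1.1 hh.1.1.2 n12, fun e => ?_, fun e => ?_⟩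
    · have := h.injective (e.trans ((m1 h).1 ((m2 h).1 hh).1).2.symm)
      revert this; decide
    · have := h.injective (e.trans ((m2 h).1 hh).2.symm)
      revert this; decide) (fun y hy => by
    simp only [Finset.mem_sdiff, Finset.mem_insert, Finset.mem_singleton, not_or] at hy
    obtain ⟨h, hh, h0, h1, h2, h3⟩ := T3' 6 n6 8 n8 12 n12 (by decide) (by decide) (by decide)
      6 n6 8 n8 y hy.1 (by decide) (Ne.symm hy.2.1) (Ne.symm hy.2.2)
    exact ⟨h, ⟨⟨⟨hh, h0⟩, h1⟩, h2⟩, h3⟩)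
  set H3 := H2 ⊓ MulAction.stabilizer (Perm (Fin 56)) (12 : Fin 56) with hH3
  have m3 : ∀ h, h ∈ H3 ↔ h ∈ H2 ∧ h 12 = 12 := fun h => Iff.rfl
  have c4 := card_chain H3 1 {1, 30} (fun h hh => by
    simp only [Finset.mem_insert, Finset.mem_singleton]
    exact base_im (hP h hh.1.1.1.1) hh.1.1.1.2 hh.1.1.2 hh.1.2 hh.2) (fun y hy => by
    simp only [Finset.mem_insert, Finset.mem_singleton] at hy
    rcases hy with rfl | rfl
    · exact ⟨1, H3.one_mem, rfl⟩
    · exact ⟨π, ⟨⟨⟨⟨hπ, π0⟩, π1⟩, π2⟩, π3⟩, π5⟩)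
  have c5 : H3 ⊓ MulAction.stabilizer (Perm (Fin 56)) (1 : Fin 56) = ⊥ := by
    rw [eq_bot_iff]
    intro h hh
    rw [Subgroup.mem_bot]
    exact base_triv (hP h hh.1.1.1.1.1) hh.1.1.1.1.2 hh.1.1.1.2 hh.1.1.2 hh.1.2 hh.2
  rw [c5] at c4
  rw [c0, c1, c2, c3, c4, card_nb, Finset.card_sdiff_of_subset (by simpa using n6),
    Finset.card_sdiff_of_subset (by simp [Finset.insert_subset_iff, n6, n8]), card_nb]
  simp


end LP

namespace LP
section Frob
open Polynomial

lemma frob_aux {R K L : Type} [CommRing R] [IsDomain R] [IsNoetherianRing R] [IsIntegrallyClosed R]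
    [Field K] [Field L] [Algebra R K] [IsFractionRing R K] [Algebra K L] [Algebra R L]
    [IsScalarTower R K L] [FiniteDimensional K L] [IsGalois K L]
    (P : Ideal R) [P.IsMaximal] [Finite (R ⧸ P)] :
    ∃ (k : Type) (_ : Field k) (red : integralClosure R L →+* k) (σ : L ≃ₐ[K] L),
      (∀ x ∈ P, red (algebraMap R _ x) = 0) ∧
      ∀ b b' : integralClosure R L, (b' : L) = σ b → red b' = red b ^ Nat.card (R ⧸ P) := by
  let B := integralClosure R L
  let : MulSemiringAction (L ≃ₐ[K] L) B := IsIntegralClosure.MulSemiringAction R K L B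
  have : IsFractionRing B L := integralClosure.isFractionRing_of_finite_extension K L
  have : SMulCommClass (L ≃ₐ[K] L) R B := ⟨fun g r b => by
    have h := map_smul (galRestrict R K L B g) r b
    exact h⟩
  have : Algebra.IsInvariant R B (L ≃ₐ[K] L) := Algebra.isInvariant_of_isGalois R K L B
  have : FaithfulSMul R L := FaithfulSMul.trans R K L
  have : FaithfulSMul R B := inferInstance
  have : Module.Finite R B := IsIntegralClosure.finite R K L B
  have : Algebra.IsIntegral R B := inferInstance
  obtain ⟨Q, hQ, hQP⟩ := Ideal.exists_maximal_ideal_liesOver_of_isIntegral P (S := B)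
  have hP : Q.under R = P := hQP.over.symm
  have : Finite (B ⧸ Q) := by
    have : Module.Finite (R ⧸ P) (B ⧸ Q) := inferInstance
    exact Module.finite_of_finite (R ⧸ P)
  obtain ⟨σ, hσ⟩ := IsArithFrobAt.exists_of_isInvariant R (L ≃ₐ[K] L) Q
  refine ⟨B ⧸ Q, Ideal.Quotient.field Q, Ideal.Quotient.mk Q, σ, ?_, ?_⟩
  · intro x hx
    rw [Ideal.Quotient.eq_zero_iff_mem]
    rw [← hP] at hx
    exact hx
  · intro b b' hb
    have h := hσ b
    rw [hP] at h
    have e : b' = σ • b := by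
      apply Subtype.ext
      rw [hb]
      exact (algebraMap_galRestrict_apply (A := R) (K := K) (L := L) (B := B) σ b).symm
    rw [← map_pow, Ideal.Quotient.eq, e]
    exact h

lemma frob {K L : Type} [Field K] [Field L] [Algebra ℤ[X] K] [IsFractionRing ℤ[X] K]
    [Algebra K L] [Algebra ℤ[X] L]
    [IsScalarTower ℤ[X] K L] [FiniteDimensional K L] [IsGalois K L] [CharZero K]
    (l : ℕ) [hl : Fact l.Prime] (u0 : ℤ) :
    ∃ (k : Type) (_ : Field k) (_ : CharP k l) (red : integralClosure ℤ[X] L →+* k) (σ : L ≃ₐ[K] L),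
      red (algebraMap ℤ[X] _ X) = u0 ∧
      ∀ b b' : integralClosure ℤ[X] L, (b' : L) = σ b → red b' = red b ^ l := by
  let f : ℤ[X] →+* ZMod l := eval₂RingHom (Int.castRingHom _) (u0 : ZMod l)
  have hf : Function.Surjective f := by
    intro y
    obtain ⟨n, rfl⟩ := ZMod.intCast_surjective y
    exact ⟨C n, by simp [f]⟩
  let P := RingHom.ker f
  have : P.IsMaximal := RingHom.ker_isMaximal_of_surjective f hf
  let e : (ℤ[X] ⧸ P) ≃+* ZMod l := RingHom.quotientKerEquivOfSurjective hf
  have : NeZero l := ⟨hl.1.ne_zero⟩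
  have : Finite (ℤ[X] ⧸ P) := Finite.of_equiv _ e.symm.toEquiv
  have hc : Nat.card (ℤ[X] ⧸ P) = l := by
    rw [Nat.card_congr e.toEquiv, Nat.card_zmod]
  obtain ⟨k, _, red, σ, h1, h2⟩ := frob_aux (K := K) (L := L) P
  have hx := h1 (X - C u0) (by simp [P, f, RingHom.mem_ker])
  have hl0 := h1 (C (l : ℤ)) (by simp [P, f, RingHom.mem_ker])
  refine ⟨k, inferInstance, ?_, red, σ, ?_, ?_⟩
  · have : (l : k) = 0 := by simpa using hl0
    obtain ⟨c, hc'⟩ := CharP.exists k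
    have h3 := (CharP.cast_eq_zero_iff k c l).1 this
    rcases (Nat.dvd_prime hl.1).1 h3 with h | h
    · subst h
      exact absurd rfl (CharP.char_ne_one k 1)
    · rwa [← h]
  · rw [map_sub, map_sub, sub_eq_zero] at hx
    rw [hx]; simp
  · rw [hc] at h2; exact h2
end Frob

end LP

namespace LP
section Red
open Polynomial

def dl (l : List ℤ) : List ℤ := der l.tail 1

lemma der_spec {S : Type*} [CommRing S] (l : List ℤ) (n : ℤ) :
    ev (der l n) (X : S[X]) = (n : S[X]) * ev l X + X * derivative (ev l X) := by
  induction l generalizing n with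
  | nil => simp [der]
  | cons a as ih =>
    simp only [der, ev_cons, ih, derivative_add, derivative_mul, derivative_X, derivative_intCast]
    push_cast; ring

lemma dl_spec {S : Type*} [CommRing S] (l : List ℤ) :
    derivative (ev l (X : S[X])) = ev (dl l) X := by
  cases l with
  | nil => simp [dl, der]
  | cons a as => simp [dl, der_spec]

lemma eval_ev {S : Type*} [CommRing S] (l : List ℤ) (y : S) : eval y (ev l (X : S[X])) = ev l y := by
  have := map_ev (evalRingHom y) l X
  simpa using this

lemma coeff_ev {S : Type*} [CommRing S] (l : List ℤ) (n : ℕ) :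
    (ev l (X : S[X])).coeff n = (l.getD n 0 : ℤ) := by
  induction l generalizing n with
  | nil => simp
  | cons a as ih =>
    cases n with
    | zero => simp
    | succ n => rw [ev_cons, coeff_add, coeff_X_mul, ih, ← C_eq_intCast, coeff_C]; simp

lemma natDegree_ev {S : Type*} [CommRing S] (l : List ℤ) (n : ℕ) (h : l.length ≤ n + 1) :
    (ev l (X : S[X])).natDegree ≤ n := by
  rw [natDegree_le_iff_coeff_eq_zero]
  intro m hm
  rw [coeff_ev, List.getD_eq_default _ _ (by omega)]; simp

/-! reduction mod `l` and mod `g` -/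
def md (l : ℤ) : List ℤ → List ℤ
  | [] => []
  | a :: as => (a % l) :: md l as

def trim : List ℤ → List ℤ
  | [] => []
  | a :: as => match trim as with
    | [] => if a == 0 then [] else [a]
    | b :: bs => a :: b :: bs

def lst : List ℤ → ℤ
  | [] => 0
  | [a] => a
  | _ :: b :: bs => lst (b :: bs)

def step (l : ℤ) (g : List ℤ) (a : ℤ) (r : List ℤ) : List ℤ :=
  if Nat.blt r.length.succ g.length then trim ((a % l) :: r)
  else trim (md l (addmul (-(lst (a :: r))) (a :: r) g))

def rem (l : ℤ) (g : List ℤ) : List ℤ → List ℤ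
  | [] => []
  | a :: as => step l g a (rem l g as)

def pwm (l : ℤ) (g a : List ℤ) : ℕ → List ℤ
  | 0 => [1]
  | n + 1 => rem l g (mul (pwm l g a n) a)

/-- list for `X ^ (l ^ n)` mod `g` -/
def frb (l : ℕ) (g : List ℤ) : ℕ → List ℤ
  | 0 => [0, 1]
  | n + 1 => pwm l g (frb l g n) l

section
variable {k : Type*} [Field k] {l : ℕ} [CharP k l]

lemma cast_md (a : ℤ) : ((a % (l : ℤ) : ℤ) : k) = a := by
  have h := Int.emod_add_mul_ediv a l
  have h2 : ((a % (l : ℤ) + l * (a / l) : ℤ) : k) = a := by rw [h]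
  rw [← h2]; push_cast; simp [CharP.cast_eq_zero k l]

lemma ev_md (a : List ℤ) (x : k) : ev (md l a) x = ev a x := by
  induction a with
  | nil => rfl
  | cons a as ih => simp only [md, ev_cons, ih, cast_md]

omit [CharP k l] in
lemma ev_trim (a : List ℤ) (x : k) : ev (trim a) x = ev a x := by
  induction a with
  | nil => rfl
  | cons a as ih =>
    rw [trim, ev_cons, ← ih]
    split <;> rename_i h
    · split <;> rename_i h2
      · have : a = 0 := by simpa using h2
        simp [h, this]
      · simp [h]
    · rw [h]; simp

lemma ev_step {g : List ℤ} {x : k} (hg : ev g x = 0) (a : ℤ) (r : List ℤ) :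
    ev (step l g a r) x = a + x * ev r x := by
  rw [step]
  split
  · rw [ev_trim, ev_cons, cast_md]
  · rw [ev_trim, ev_md, ev_addmul, hg]; simp

lemma ev_rem {g : List ℤ} {x : k} (hg : ev g x = 0) (a : List ℤ) :
    ev (rem l g a) x = ev a x := by
  induction a with
  | nil => rfl
  | cons a as ih => rw [rem, ev_step hg, ih]; rfl

lemma ev_pwm {g : List ℤ} {x : k} (hg : ev g x = 0) (a : List ℤ) (n : ℕ) :
    ev (pwm l g a n) x = ev a x ^ n := by
  induction n with
  | zero => simp [pwm]
  | succ n ih => rw [pwm, ev_rem hg, ev_mul, ih, pow_succ]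

lemma ev_frb {g : List ℤ} {x : k} (hg : ev g x = 0) (n : ℕ) :
    ev (frb l g n) x = x ^ l ^ n := by
  induction n with
  | zero => simp [frb]
  | succ n ih => rw [frb, ev_pwm hg, ih, ← pow_mul, pow_succ]

lemma frb_eq {g : List ℤ} {n : ℕ} (h : frb l g n = [0, 1]) {x : k} (hg : ev g x = 0) :
    x ^ l ^ n = x := by
  rw [← ev_frb (l := l) hg, h]; simp

lemma frb_ne {g v : List ℤ} {n : ℕ} (h : rem l g (mul v (addmul (-1) (frb l g n) [0, 1])) = [1])
    {x : k} (hg : ev g x = 0) : x ^ l ^ n ≠ x := by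
  intro e
  have h2 := congrArg (fun z => ev z x) h
  simp only [ev_rem hg, ev_mul, ev_addmul, ev_frb hg, e] at h2
  simp at h2

lemma inv_ne {g v w : List ℤ} (h : rem l g (mul v w) = [1])
    {x : k} (hg : ev g x = 0) : ev w x ≠ 0 := by
  intro e
  have h2 := congrArg (fun z => ev z x) h
  simp only [ev_rem hg, ev_mul, e] at h2
  simp at h2

/-- numeric evaluation -/
lemma ev_num (a : List ℤ) (y : ℤ) : ev a (y : k) = ((evZ a y : ℤ) : k) := by
  rw [evZ_eq]; exact (map_ev (Int.castRingHom k) a y).symm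

lemma num_zero {z : ℤ} (h : z % (l : ℤ) = 0) : (z : k) = 0 := by
  rw [← cast_md (l := l), h]; simp

lemma num_ne {z : ℤ} (h : z % (l : ℤ) ≠ 0) : (z : k) ≠ 0 := by
  intro e
  rw [CharP.intCast_eq_zero_iff k l] at e
  exact h (Int.emod_eq_zero_of_dvd e)
end

def fl (u0 : ℤ) : List ℤ := addmul u0 PL RL

def Fac {ι B : Type} [Fintype ι] [CommRing B] (a : ι → B) (u : B) : Prop :=
  (ev PL X + C u * ev RL X : B[X]) = ∏ i, (X - C (a i))

section
variable {ι B k : Type} [Fintype ι] [DecidableEq ι] [CommRing B] [IsDomain B] [Field k]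
  {a : ι → B} {u : B} (hF : Fac a u)

include hF in
omit [IsDomain B] [DecidableEq ι] in
lemma Fac.root (i : ι) : ev PL (a i) + u * ev RL (a i) = 0 := by
  have := congrArg (eval (a i)) hF
  rw [eval_prod, Finset.prod_eq_zero (Finset.mem_univ i) (by simp)] at this
  simpa [eval_ev] using this

variable (red : B →+* k) {u0 : ℤ} (hu : red u = u0)

include hF hu in
omit [IsDomain B] [DecidableEq ι] in
lemma Fac.redp : ev (fl u0) (X : k[X]) = ∏ i, (X - C (red (a i))) := by
  have h := congrArg (mapRingHom red) hF
  rw [map_prod, map_add, map_mul, map_ev _ PL, map_ev _ RL] at h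
  simp only [coe_mapRingHom, map_X, map_C, hu, Polynomial.map_sub] at h
  rw [← h, fl, ev_addmul, map_intCast]

include hF hu in
omit [IsDomain B] [DecidableEq ι] in
lemma Fac.red_root (i : ι) : ev (fl u0) (red (a i)) = 0 := by
  rw [← eval_ev, hF.redp red hu, eval_prod, Finset.prod_eq_zero (Finset.mem_univ i) (by simp)]

include hF hu in
omit [IsDomain B] [DecidableEq ι] in
lemma Fac.exists_root {y : k} (hy : ev (fl u0) y = 0) : ∃ i, red (a i) = y := by
  rw [← eval_ev, hF.redp red hu, eval_prod, Finset.prod_eq_zero_iff] at hy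
  obtain ⟨i, -, h⟩ := hy
  refine ⟨i, ?_⟩
  simp only [eval_sub, eval_X, eval_C, sub_eq_zero] at h
  exact h.symm

include hF hu in
omit [IsDomain B] in
lemma Fac.red_inj (hs : ∀ y : k, ev (fl u0) y = 0 → ev (dl (fl u0)) y ≠ 0) :
    Function.Injective (fun i => red (a i)) := by
  intro i j hij
  by_contra hne
  apply hs _ (hF.red_root red hu i)
  rw [← eval_ev, ← dl_spec, hF.redp red hu, ← Finset.mul_prod_erase _ _ (Finset.mem_univ i),
    ← Finset.mul_prod_erase _ _ (Finset.mem_erase.2 ⟨Ne.symm hne, Finset.mem_univ j⟩)]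
  simp only at hij
  simp [derivative_mul, hij]

include hF hu in
omit [DecidableEq ι] in
lemma Fac.lift (hs : ∀ y : k, ev (fl u0) y = 0 → ev (dl (fl u0)) y ≠ 0) {i j : ι}
    (hij : a i ≠ a j) (hR : ev RL (red (a j)) ≠ 0)
    (hA : ev2 AL (red (a i)) (red (a j)) = 0) : ev2 AL (a i) (a j) = 0 := by
  obtain ⟨BL, hB⟩ := main_id
  have h1 := hB B (a i) (a j)
  have ri := hF.root i
  have rj := hF.root j
  have h0 : ev PL (a i) * ev RL (a j) - ev RL (a i) * ev PL (a j) = 0 := by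
    linear_combination ev RL (a j) * ri - ev RL (a i) * rj
  rw [h0] at h1
  rcases mul_eq_zero.1 h1.symm with h | h
  · rcases mul_eq_zero.1 h with h | h
    · exact absurd (sub_eq_zero.1 h) hij
    · exact h
  · exfalso
    have hb := congrArg red h
    rw [map_ev2, map_zero] at hb
    have h2 := hB k[X] X (C (red (a j)))
    have e1 : ∀ l : List ℤ, ev l (C (red (a j))) = C (ev l (red (a j))) := fun l => (map_ev C l _).symm
    rw [e1, e1] at h2
    have hp : ev PL (red (a j)) = - u0 * ev RL (red (a j)) := by
      have := hF.red_root red hu j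
      rw [fl, ev_addmul] at this
      linear_combination this
    have h3 : ev (fl u0) X * C (ev RL (red (a j))) =
        (X - C (red (a j))) * ev2 AL X (C (red (a j))) * ev2 BL X (C (red (a j))) := by
      rw [← h2, hp, fl, ev_addmul, C_mul, C_neg]
      simp; ring
    have h4 := congrArg (fun z => eval (red (a i)) (derivative z)) h3
    have e2 : ∀ l : List (List ℤ), eval (red (a i)) (ev2 l X (C (red (a j)))) =
        ev2 l (red (a i)) (red (a j)) := by
      intro l
      have := map_ev2 (evalRingHom (red (a i))) l X (C (red (a j)))
      simpa using this
    simp only [derivative_mul, derivative_C, mul_zero, add_zero, eval_add, eval_mul, e2, hA, hb,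
      eval_C, dl_spec, eval_ev, zero_mul] at h4
    exact (mul_ne_zero (hs _ (hF.red_root red hu i)) hR) h4

end
end Red

end LP

namespace LP
def sv0 : List ℤ := [122, 641, 187, 872, 472, 193, 918, 1642, 1189, 515, 219, 1470, 1985, 1133, 1195, 1795, 1524, 2102, 1734, 1922, 2120, 710, 1984, 1734, 2054, 706, 388, 1307, 590, 596, 1759, 920, 361, 586, 1897, 95, 873, 402, 403, 1119, 1795, 2065, 1598, 696, 1929, 147, 379, 691, 1567, 1607, 1888, 494, 138, 1183, 1082, 1895]
def sv1 : List ℤ := [5, 0, 3, 3, 3, 6, 2, 6, 3, 5, 4, 0, 1, 2, 2, 3, 4, 3, 4, 0, 6, 6, 5, 1, 6, 5, 4, 3, 1, 6, 1, 1, 3, 5, 2, 2, 6, 4, 1, 3, 3, 2, 0, 6, 1, 2, 6, 0, 3, 1, 4, 0, 2, 2, 0, 2]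
def sv2 : List ℤ := [1, 6, 5, 6, 1, 4, 5, 2, 3, 5, 1, 2, 1, 5, 4, 6, 5, 0, 3, 6, 5, 2, 2, 0, 1, 5, 5, 2, 6, 3, 4, 4, 0, 1, 1, 2, 5, 3, 5, 5, 4, 5, 1, 4, 4, 4, 1, 4, 1, 6, 0, 3, 1, 5, 0, 4]
def sv3 : List ℤ := [8, 9, 11, 3, 9, 5, 10, 8, 12, 0, 11, 8, 8, 4, 11, 11, 12, 6, 10, 1, 9, 11, 2, 10, 5, 8, 8, 7, 3, 3, 1, 6, 9, 10, 0, 11, 8, 10, 1, 5, 7, 10, 10, 12, 10, 12, 4, 6, 4, 12, 10, 12, 6, 12, 10, 12]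
def gR : List ℤ := [2, 1, 2, 1, 3, 1, 0, 6, 2, 3, 1]
def cR : ℤ := 1
def vR : List ℤ := [6, 3, 0, 3, 4, 6, 5, 0, 6, 3]
def cT : ℤ := 4
def yT : ℤ := 6
def g3 : List ℤ := [4, 1, 2, 1]
def g6 : List ℤ := [2, 4, 2, 3, 1, 2, 1]
def v32 : List ℤ := [4, 6, 5]
def v62 : List ℤ := [6, 1, 3, 3, 6, 3]
def v63 : List ℤ := [6, 0, 1, 5, 2, 1]
def cS : ℤ := 9
def yS : ℤ := 5
def yS' : ℤ := 7
def g8 : List ℤ := [10, 8, 2, 10, 9, 11, 6, 3, 1]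
def v84 : List ℤ := [2, 1, 7, 1, 6, 11, 0, 5]

end LP

namespace LP
section FD
open Polynomial

lemma sep0 : rem 2137 (fl 1198) (mul sv0 (dl (fl 1198))) = [1] := by decide +kernel
lemma sep1 : rem 7 (fl 1) (mul sv1 (dl (fl 1))) = [1] := by decide +kernel
lemma sep2 : rem 7 (fl 3) (mul sv2 (dl (fl 3))) = [1] := by decide +kernel
lemma sep3 : rem 13 (fl 5) (mul sv3 (dl (fl 5))) = [1] := by decide +kernel

def chkSplit : Bool :=
  (List.range 56).all fun j =>
    let c : ℤ := (cs.getD j 0 : ℕ)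
    (evZ (fl 1198) c % 2137 == 0) && (evZ RL c % 2137 != 0) &&
    (let h := md 2137 (pk c AL)
    (List.range 56).all fun i => (evZ h (cs.getD i 0 : ℕ) % 2137 == 0) == (row i).testBit j)

lemma split_ok : chkSplit = true := by decide +kernel
lemma cs_inj : ∀ i j : Fin 56, cs.getD i 0 % 2137 = cs.getD j 0 % 2137 → i = j := by decide +kernel
lemma adj_symm : ∀ i j : Fin 56, adj i j = adj j i := by decide +kernel
lemma adj_irr : ∀ i : Fin 56, adj i i = false := by decide +kernel

lemma hR_ok : isZ (md 7 (addmul (-1) (pk 5 AL) gR)) = true := by decide +kernel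
lemma hT_ok : isZ (md 7 (addmul (-1) (pk 3 AL) (mul (mul [-yT * cT, cT] g3) g6))) = true := by
  decide +kernel
lemma hS_ok : isZ (md 13 (addmul (-1) (pk 0 AL) (mul (mul [-yS * cS, cS] [-yS', 1]) g8))) = true := by
  decide +kernel
lemma rR : rem 7 gR (mul vR (addmul (-1) (frb 7 gR 1) [0, 1])) = [1] := by decide +kernel
lemma r32 : rem 7 g3 (mul v32 (addmul (-1) (frb 7 g3 2) [0, 1])) = [1] := by decide +kernel
lemma r62 : rem 7 g6 (mul v62 (addmul (-1) (frb 7 g6 2) [0, 1])) = [1] := by decide +kernel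
lemma r63 : rem 7 g6 (mul v63 (addmul (-1) (frb 7 g6 3) [0, 1])) = [1] := by decide +kernel
lemma r33 : frb 7 g3 3 = [0, 1] := by decide +kernel
lemma r84 : rem 13 g8 (mul v84 (addmul (-1) (frb 13 g8 4) [0, 1])) = [1] := by decide +kernel
lemma r88 : frb 13 g8 8 = [0, 1] := by decide +kernel
lemma nT : evZ (fl 3) yT % (7 : ℕ) = 0 := by decide +kernel
lemma nS : evZ (fl 5) yS % (13 : ℕ) = 0 := by decide +kernel
lemma nS' : evZ (fl 5) yS' % (13 : ℕ) = 0 := by decide +kernel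
lemma mR : evZ (fl 1) 5 % (7 : ℕ) = 0 := by decide +kernel
lemma mT : evZ (fl 3) 3 % (7 : ℕ) = 0 := by decide +kernel
lemma mS : evZ (fl 5) 0 % (13 : ℕ) = 0 := by decide +kernel
lemma kR : evZ RL 5 % (7 : ℕ) ≠ 0 := by decide +kernel
lemma kT : evZ RL 3 % (7 : ℕ) ≠ 0 := by decide +kernel
lemma kS : evZ RL 0 % (13 : ℕ) ≠ 0 := by decide +kernel
end FD

end LP

namespace LP
section FD2
open Polynomial Equiv

lemma ev_pk {k : Type*} [CommRing k] (y : ℤ) (l : List (List ℤ)) (x : k) :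
    ev (pk y l) x = ev2 l x (y : k) := by
  induction l with
  | nil => rfl
  | cons a l ih =>
    rw [pk, ev_cons, ev2_cons, ih, evZ_eq]
    congr 1
    exact map_ev (Int.castRingHom k) a y

lemma ev_eq_of_md {k : Type*} [Field k] {l : ℕ} [CharP k l] {a b : List ℤ}
    (h : isZ (md l (addmul (-1) a b)) = true) (x : k) : ev a x = ev b x := by
  have h2 := ev_isZ h x
  rw [ev_md, ev_addmul] at h2
  push_cast at h2
  linear_combination h2

lemma exists_not_root {k : Type} [Field k] (g : List ℤ) (n : ℕ) (hn : g.getD n 0 = 1)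
    (hl : g.length ≤ n + 1) (T : Finset (Fin 56)) (hT : n < T.card) (β : Fin 56 → k)
    (hβ : Function.Injective β) : ∃ j ∈ T, ev g (β j) ≠ 0 := by
  classical
  by_contra! hcon
  have hc := coeff_ev (S := k) g n
  rw [hn] at hc
  have h0 : ev g (X : k[X]) ≠ 0 := by
    intro e; rw [e] at hc; simp at hc
  have h1 : (T.image β).card ≤ (ev g (X : k[X])).natDegree := by
    apply Polynomial.card_le_degree_of_subset_roots
    intro y hy
    have hy : y ∈ T.image β := hy
    obtain ⟨j, hj, rfl⟩ := Finset.mem_image.1 hy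
    rw [mem_roots h0, IsRoot, eval_ev]
    exact hcon j hj
  rw [Finset.card_image_of_injective _ hβ] at h1
  have := natDegree_ev (S := k) g n hl
  omega

def FD (H : Subgroup (Perm (Fin 56))) (l : ℕ) (u0 y0 : ℤ) : Prop :=
  ∃ h ∈ H, ∃ (k : Type) (_ : Field k) (_ : CharP k l) (β : Fin 56 → k) (i0 : Fin 56),
    Function.Injective β ∧ β i0 = y0 ∧ (∀ j, β (h j) = β j ^ l) ∧
    (∀ j ∈ nb i0, ev (pk y0 AL) (β j) = 0) ∧
    (∀ y : k, ev (fl u0) y = 0 → ev (pk y0 AL) y = 0 → y ≠ y0 → ∃ j ∈ nb i0, β j = y)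

section
variable {H : Subgroup (Perm (Fin 56))} {k : Type} [Field k] {l : ℕ} [CharP k l] {β : Fin 56 → k}
  {h : Perm (Fin 56)}

omit [CharP k l] in
lemma pow_frob (hh : ∀ j, β (h j) = β j ^ l) (n : ℕ) (j : Fin 56) : β ((h ^ n) j) = β j ^ l ^ n := by
  induction n with
  | zero => simp
  | succ n ih => rw [pow_succ', Perm.mul_apply, hh, ih, ← pow_mul, pow_succ]

lemma fix_num (hβ : Function.Injective β) (hh : ∀ j, β (h j) = β j ^ l) [Fact l.Prime] {j : Fin 56} {y : ℤ}
    (hj : β j = y) : h j = j := by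
  apply hβ
  rw [hh, hj]
  have := map_intCast (frobenius k l) y
  rwa [frobenius_def] at this
end

instance : Fact (Nat.Prime 7) := ⟨by norm_num⟩
instance : Fact (Nat.Prime 13) := ⟨by norm_num⟩
instance : Fact (Nat.Prime 2137) := ⟨by norm_num⟩

lemma fd_rho {H : Subgroup (Perm (Fin 56))} (hf : FD H 7 1 5) :
    ∃ h ∈ H, ∃ i, h i = i ∧ ∀ j ∈ nb i, h j ≠ j := by
  obtain ⟨h, hH, k, _, _, β, i0, hβ, hi, hh, hn, -⟩ := hf
  refine ⟨h, hH, i0, fix_num hβ hh hi, fun j hj e => ?_⟩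
  have h1 := hn j hj
  rw [ev_eq_of_md (l := 7) hR_ok] at h1
  have h2 := frb_ne (l := 7) rR h1
  rw [pow_one, ← hh, e] at h2
  exact h2 rfl

lemma fd_tau {H : Subgroup (Perm (Fin 56))} (hf : FD H 7 3 3) :
    ∃ h ∈ H, ∃ i w b c, h i = i ∧ w ∈ nb i ∧ h w = w ∧
      (∀ j ∈ nb i, h (h j) = j → j = w) ∧ b ∈ nb i ∧ b ≠ w ∧ h (h (h b)) = b ∧ h (h (h c)) ≠ c := by
  obtain ⟨h, hH, k, _, _, β, i0, hβ, hi, hh, hn, hex⟩ := hf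
  have hfac : ∀ y : k, ev (pk 3 AL) y = cT * (y - yT) * ev g3 y * ev g6 y := by
    intro y
    rw [ev_eq_of_md (l := 7) hT_ok, ev_mul, ev_mul]
    simp only [ev_cons, ev_nil]; push_cast; ring
  obtain ⟨w, hw, hwy⟩ := hex yT (by rw [ev_num, num_zero nT]) (by rw [hfac]; simp) (by
    rw [Ne, ← sub_eq_zero, ← Int.cast_sub]
    exact num_ne (l := 7) (by decide))
  have hc0 : (cT : k) ≠ 0 := num_ne (l := 7) (by decide)
  have cases : ∀ j ∈ nb i0, j ≠ w → ev g3 (β j) = 0 ∨ ev g6 (β j) = 0 := by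
    intro j hj hjw
    have h1 := hn j hj
    rw [hfac] at h1
    have h2 : β j - yT ≠ 0 := by
      rw [← hwy, sub_ne_zero]; exact fun e => hjw (hβ e)
    simpa [hc0, h2] using h1
  have p2 : ∀ j, h (h j) = (h ^ 2) j := fun j => by rw [pow_two]; rfl
  have p3 : ∀ j, h (h (h j)) = (h ^ 3) j := fun j => by rw [pow_succ, pow_two]; rfl
  obtain ⟨b, hb, hb6⟩ := exists_not_root (mul [-yT, 1] g6) 7 (by decide +kernel) (by decide +kernel)
    (nb i0) (by rw [card_nb]; norm_num) β hβ
  obtain ⟨c, hc, hc3⟩ := exists_not_root (mul [-yT, 1] g3) 4 (by decide +kernel) (by decide +kernel)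
    (nb i0) (by rw [card_nb]; norm_num) β hβ
  rw [ev_mul, mul_ne_zero_iff] at hb6 hc3
  have hbw : b ≠ w := by
    rintro rfl
    apply hb6.1
    simp [hwy]
  have hcw : c ≠ w := by
    rintro rfl
    apply hc3.1
    simp [hwy]
  have hb3 := (cases b hb hbw).resolve_right hb6.2
  have hc6 := (cases c hc hcw).resolve_left hc3.2
  refine ⟨h, hH, i0, w, b, c, fix_num hβ hh hi, hw, fix_num hβ hh hwy, ?_, hb, hbw, ?_, ?_⟩
  · intro j hj e
    by_contra hjw
    rw [p2] at e
    have e2 := pow_frob hh 2 j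
    rw [e] at e2
    rcases cases j hj hjw with h1 | h1
    · exact frb_ne (l := 7) r32 h1 e2.symm
    · exact frb_ne (l := 7) r62 h1 e2.symm
  · rw [p3]
    apply hβ
    rw [pow_frob hh]
    exact frb_eq (l := 7) r33 hb3
  · rw [p3]
    intro e
    have e2 := pow_frob hh 3 c
    rw [e] at e2
    exact frb_ne (l := 7) r63 hc6 e2.symm

lemma fd_sigma {H : Subgroup (Perm (Fin 56))} (hf : FD H 13 5 0) :
    ∃ h ∈ H, ∃ i u v, h i = i ∧ u ∈ nb i ∧ v ∈ nb i ∧ u ≠ v ∧ h u = u ∧ h v = v ∧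
      ∀ j ∈ nb i, j ≠ u → j ≠ v → (h ^ 4) j ≠ j ∧ (h ^ 8) j = j := by
  obtain ⟨h, hH, k, _, _, β, i0, hβ, hi, hh, hn, hex⟩ := hf
  have hfac : ∀ y : k, ev (pk 0 AL) y = cS * (y - yS) * (y - yS') * ev g8 y := by
    intro y
    rw [ev_eq_of_md (l := 13) hS_ok, ev_mul, ev_mul]
    simp only [ev_cons, ev_nil]; push_cast; ring
  obtain ⟨u, hu, huy⟩ := hex yS (by rw [ev_num, num_zero nS]) (by rw [hfac]; simp) (by
    rw [Ne, ← sub_eq_zero, ← Int.cast_sub]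
    exact num_ne (l := 13) (by decide))
  obtain ⟨v, hv, hvy⟩ := hex yS' (by rw [ev_num, num_zero nS']) (by rw [hfac]; simp) (by
    rw [Ne, ← sub_eq_zero, ← Int.cast_sub]
    exact num_ne (l := 13) (by decide))
  have hc0 : (cS : k) ≠ 0 := num_ne (l := 13) (by decide)
  refine ⟨h, hH, i0, u, v, fix_num hβ hh hi, hu, hv, ?_, fix_num hβ hh huy, fix_num hβ hh hvy, ?_⟩
  · rintro rfl
    rw [huy, ← sub_eq_zero, ← Int.cast_sub] at hvy
    exact num_ne (l := 13) (by decide) hvy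
  · intro j hj hju hjv
    have h1 := hn j hj
    rw [hfac] at h1
    have h2 : β j - yS ≠ 0 := by
      rw [← huy, sub_ne_zero]; exact fun e => hju (hβ e)
    have h3 : β j - yS' ≠ 0 := by
      rw [← hvy, sub_ne_zero]; exact fun e => hjv (hβ e)
    have h4 : ev g8 (β j) = 0 := by simpa [hc0, h2, h3] using h1
    constructor
    · intro e
      have e2 := pow_frob hh 4 j
      rw [e] at e2
      exact frb_ne (l := 13) r84 h4 e2.symm
    · apply hβ
      rw [pow_frob hh]
      exact frb_eq (l := 13) r88 h4
end FD2

end LP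

namespace LP
section Main
open Polynomial Equiv

lemma lenPL : PL.length ≤ 56 + 1 := by decide +kernel
lemma lenRL : RL.length ≤ 52 + 1 := by decide +kernel
lemma leadPL : PL.getD 56 0 = 1 := by decide +kernel

lemma monic_f {S : Type*} [CommRing S] [Nontrivial S] (u : S) :
    (ev PL X + C u * ev RL X : S[X]).Monic ∧ (ev PL X + C u * ev RL X : S[X]).natDegree = 56 := by
  have h1 : (C u * ev RL X : S[X]).natDegree ≤ 52 :=
    (natDegree_C_mul_le _ _).trans (natDegree_ev RL 52 lenRL)
  have hle : (ev PL X + C u * ev RL X : S[X]).natDegree ≤ 56 :=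
    natDegree_add_le_of_degree_le (natDegree_ev PL 56 lenPL) (h1.trans (by norm_num))
  have hc : (ev PL X + C u * ev RL X : S[X]).coeff 56 = 1 := by
    rw [coeff_add, coeff_ev, leadPL, coeff_eq_zero_of_natDegree_lt (lt_of_le_of_lt h1 (by norm_num))]
    simp
  have hm := monic_of_natDegree_le_of_coeff_eq_one 56 hle hc
  refine ⟨hm, le_antisymm hle ?_⟩
  apply le_natDegree_of_ne_zero
  rw [hc]; exact one_ne_zero

lemma map_f {S T : Type*} [CommRing S] [CommRing T] (f : S →+* T) (u : S) :
    (ev PL X + C u * ev RL X : S[X]).map f = ev PL X + C (f u) * ev RL X := by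
  rw [← coe_mapRingHom, map_add, map_mul, map_ev (mapRingHom f) PL, map_ev (mapRingHom f) RL]
  simp

lemma split_spec : (∀ j : Fin 56, evZ (fl 1198) (cs.getD j 0 : ℕ) % (2137 : ℕ) = 0 ∧
      evZ RL (cs.getD j 0 : ℕ) % (2137 : ℕ) ≠ 0 ∧ ∀ i : Fin 56,
      (evZ (md (2137 : ℕ) (pk (cs.getD j 0 : ℕ) AL)) (cs.getD i 0 : ℕ) % (2137 : ℕ) = 0 ↔
        adj i j = true)) := by
  intro j
  have h := split_ok
  rw [chkSplit, List.all_eq_true] at h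
  have hj := h j (List.mem_range.2 j.2)
  simp only [Bool.and_eq_true, List.all_eq_true, List.mem_range] at hj
  obtain ⟨⟨h1, h2⟩, h3⟩ := hj
  refine ⟨by simpa using h1, by simpa using h2, fun i => ?_⟩
  have := h3 i i.2
  rw [beq_iff_eq] at this
  rw [adj, ← this, beq_iff_eq]
  rfl

theorem main_card {K L : Type} [Field K] [Field L] [Algebra ℤ[X] K] [IsFractionRing ℤ[X] K]
    [Algebra K L] [Algebra ℤ[X] L]
    [IsScalarTower ℤ[X] K L] [FiniteDimensional K L] [IsGalois K L] [CharZero K]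
    (s : Finset L) (hc : s.card = 56)
    (hroot : ∀ x ∈ s, ev PL x + algebraMap ℤ[X] L X * ev RL x = 0)
    (htr : ∀ x ∈ s, ∀ y ∈ s, ∃ σ : L ≃ₐ[K] L, σ x = y)
    (hfaith : ∀ σ : L ≃ₐ[K] L, (∀ x ∈ s, σ x = x) → σ = 1) :
    Nat.card (L ≃ₐ[K] L) = 80640 := by
  classical
  let B := integralClosure ℤ[X] L
  let u : B := algebraMap ℤ[X] B X
  have hint : ∀ x ∈ s, IsIntegral ℤ[X] x := by
    intro x hx
    refine ⟨ev PL X + C (X : ℤ[X]) * ev RL X, (monic_f _).1, ?_⟩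
    have := hroot x hx
    rw [← coe_eval₂RingHom, map_add, map_mul, map_ev _ PL, map_ev _ RL]
    simpa using this
  let a0 : s → B := fun x => ⟨x, hint x x.2⟩
  have hF0 : Fac a0 u := by
    have hinj : Function.Injective (mapRingHom (algebraMap B L)) :=
      map_injective _ (FaithfulSMul.algebraMap_injective B L)
    apply hinj
    rw [map_prod, coe_mapRingHom]
    refine (map_f (algebraMap B L) u).trans ?_
    simp only [map_X, map_C, Polynomial.map_sub]
    have e1 : ∀ i : s, algebraMap B L (a0 i) = i := fun i => rfl
    have e2 : algebraMap B L u = algebraMap ℤ[X] L X := rfl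
    simp only [e1, e2]
    obtain ⟨hm, hd⟩ := monic_f (algebraMap ℤ[X] L X)
    rw [Finset.prod_coe_sort s (fun x : L => X - C x)]
    have hle : s.val ≤ (ev PL X + C (algebraMap ℤ[X] L X) * ev RL X : L[X]).roots := by
      rw [Multiset.le_iff_subset s.nodup]
      intro x hx
      rw [mem_roots hm.ne_zero, IsRoot, eval_add, eval_mul, eval_C, eval_ev, eval_ev]
      exact hroot x hx
    have heq : s.val = (ev PL X + C (algebraMap ℤ[X] L X) * ev RL X : L[X]).roots := by
      apply Multiset.eq_of_le_of_card_le hle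
      refine (card_roots' _).trans ?_
      rw [hd]; exact hc.ge
    have := prod_multiset_X_sub_C_of_monic_of_roots_card_eq hm (by
      rw [← heq, hd]; exact hc)
    rw [← this, ← heq]
    rfl
  -- the split prime
  obtain ⟨a, hF, haL, hadj⟩ : ∃ a : Fin 56 → B, Fac a u ∧ (∀ x ∈ s, ∃ i, (a i : L) = x) ∧
      ∀ i j, adj i j = true ↔ ev2 AL (a i) (a j) = 0 := by
    obtain ⟨k, _, _, red, -, hu, -⟩ := frob (K := K) (L := L) 2137 1198
    have hs : ∀ y : k, ev (fl 1198) y = 0 → ev (dl (fl 1198)) y ≠ 0 := fun y hy =>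
      inv_ne (l := 2137) sep0 hy
    let c : Fin 56 → ℤ := fun i => (cs.getD i 0 : ℕ)
    have hex : ∀ i : Fin 56, ∃ x : s, red (a0 x) = (c i : k) := fun i =>
      hF0.exists_root red hu (by rw [ev_num, num_zero (split_spec i).1])
    choose e he using hex
    have einj : Function.Injective e := by
      intro i j hij
      have h1 : (c i : k) = c j := by rw [← he, ← he, hij]
      apply cs_inj
      have h2 : ((cs.getD i 0 : ℕ) : k) = (cs.getD j 0 : ℕ) := by simpa [c] using h1
      exact (CharP.natCast_eq_natCast k 2137).1 h2
    have ebij : Function.Bijective e := by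
      rw [Fintype.bijective_iff_injective_and_card]
      exact ⟨einj, by simp [hc]⟩
    have hF : Fac (fun i => a0 (e i)) u := by
      rw [Fac, hF0]
      exact (Equiv.prod_comp (Equiv.ofBijective e ebij) (fun x => (X - C (a0 x) : B[X]))).symm
    refine ⟨fun i => a0 (e i), hF, ?_, ?_⟩
    · intro x hx
      obtain ⟨i, hi⟩ := ebij.2 ⟨x, hx⟩
      exact ⟨i, congrArg Subtype.val hi⟩
    · intro i j
      have hnum : ev2 AL (c i : k) (c j : k) = ((evZ (md (2137 : ℕ) (pk (c j) AL)) (c i) : ℤ) : k) := by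
        rw [← ev_pk, ← ev_num, ev_md]
      have hsp := (split_spec j).2.2 i
      constructor
      · intro hij
        have hne : i ≠ j := by
          rintro rfl
          rw [adj_irr] at hij; exact Bool.false_ne_true hij
        refine hF.lift red hu hs (fun e' => hne (einj ?_)) ?_ ?_
        · have := congrArg (fun z : B => (z : L)) e'
          exact Subtype.ext this
        · rw [he, ev_num]; exact num_ne (l := 2137) (split_spec j).2.1
        · rw [he, he, hnum]; exact num_zero (l := 2137) (hsp.2 hij)
      · intro h0
        have h1 := congrArg red h0
        rw [map_ev2, map_zero, he, he, hnum] at h1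
        apply hsp.1
        by_contra h2
        exact num_ne (l := 2137) h2 h1
  let x : Fin 56 → L := fun i => a i
  have hxroot : ∀ i, x i ∈ s := by
    intro i
    have h1 := congrArg (eval (a i)) (hF.symm.trans hF0)
    rw [eval_prod, eval_prod, Finset.prod_eq_zero (Finset.mem_univ i) (by simp), eq_comm,
      Finset.prod_eq_zero_iff] at h1
    obtain ⟨y, -, hy⟩ := h1
    simp only [eval_sub, eval_X, eval_C, sub_eq_zero] at hy
    have : x i = y := by
      change ((a i : B) : L) = y
      rw [hy]
    rw [this]; exact y.2
  have xsurj : Function.Surjective (fun i => (⟨x i, hxroot i⟩ : s)) := by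
    rintro ⟨y, hy⟩
    obtain ⟨i, hi⟩ := haL y hy
    exact ⟨i, Subtype.ext hi⟩
  have xinj : Function.Injective x := by
    have : Function.Bijective (fun i => (⟨x i, hxroot i⟩ : s)) := by
      rw [Fintype.bijective_iff_surjective_and_card]
      exact ⟨xsurj, by simp [hc]⟩
    intro i j hij
    exact this.1 (Subtype.ext hij)
  have hperm : ∀ (σ : L ≃ₐ[K] L) (i : Fin 56), ∃ j, x j = σ (x i) := by
    intro σ i
    have h1 := congrArg (fun z : B => (z : L)) (hF.root i)
    have h2 : ev PL (x i) + algebraMap ℤ[X] L X * ev RL (x i) = 0 := hroot _ (hxroot i)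
    have h3 := congrArg σ h2
    have h4 : σ (algebraMap ℤ[X] L X) = algebraMap ℤ[X] L X := by
      rw [IsScalarTower.algebraMap_apply ℤ[X] K L, AlgEquiv.commutes]
    have h5 : ∀ l : List ℤ, σ (ev l (x i)) = ev l (σ (x i)) := fun l =>
      map_ev (σ : L →+* L) l (x i)
    rw [map_add, map_mul, h4, h5, h5, map_zero] at h3
    have h6 := congrArg (fun z => (z.map (algebraMap B L)).eval (σ (x i))) hF
    simp only [Polynomial.map_prod, eval_prod] at h6
    have h7 : eval (σ (x i)) (Polynomial.map (algebraMap B L) (ev PL X + C u * ev RL X)) = 0 := by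
      refine (congrArg (eval (σ (x i))) (map_f (algebraMap B L) u)).trans ?_
      rw [eval_add, eval_mul, eval_C, eval_ev, eval_ev]
      exact h3
    rw [h7, eq_comm, Finset.prod_eq_zero_iff] at h6
    obtain ⟨j, -, hj⟩ := h6
    refine ⟨j, ?_⟩
    simp only [Polynomial.map_sub, map_X, map_C, eval_sub, eval_X, eval_C, sub_eq_zero] at hj
    exact hj.symm
  choose π hπ using hperm
  have πinj : ∀ σ, Function.Injective (π σ) := by
    intro σ i j hij
    apply xinj
    apply σ.injective
    rw [← hπ, ← hπ, hij]
  let φ : (L ≃ₐ[K] L) →* Perm (Fin 56) := MonoidHom.mk'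
    (fun σ => Equiv.ofBijective (π σ) (Finite.injective_iff_bijective.1 (πinj σ))) (by
      intro σ τ
      apply Equiv.ext
      intro i
      apply xinj
      change x (π (σ * τ) i) = x (π σ (π τ i))
      rw [hπ, hπ, hπ]; rfl)
  have hφ : ∀ σ i, x (φ σ i) = σ (x i) := hπ
  have φinj : Function.Injective φ := by
    rw [injective_iff_map_eq_one]
    intro σ hσ
    apply hfaith
    intro y hy
    obtain ⟨i, rfl⟩ := haL y hy
    have := hφ σ i
    rw [hσ] at this
    exact this.symm
  rw [Nat.card_congr (MonoidHom.ofInjective φinj).toEquiv]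
  have hA : ∀ i j, adj i j = true ↔ ev2 AL (x i) (x j) = 0 := by
    intro i j
    rw [hadj]
    have := map_ev2 (algebraMap B L) AL (a i) (a j)
    change algebraMap B L _ = ev2 AL (x i) (x j) at this
    rw [← this, map_eq_zero_iff _ (FaithfulSMul.algebraMap_injective B L)]
  have key : ∀ (l : ℕ) [Fact l.Prime] (u0 y0 : ℤ),
      (∀ (k : Type) [Field k] [CharP k l] (y : k), ev (fl u0) y = 0 → ev (dl (fl u0)) y ≠ 0) →
      evZ (fl u0) y0 % l = 0 → evZ RL y0 % l ≠ 0 → FD φ.range l u0 y0 := by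
    intro l _ u0 y0 hs h0 hR
    obtain ⟨k, _, _, red, σ, hu, hσ⟩ := frob (K := K) (L := L) l u0
    have hs := hs k
    obtain ⟨i0, hi0⟩ := hF.exists_root red hu (y := (y0 : k)) (by rw [ev_num, num_zero h0])
    have binj := hF.red_inj red hu hs
    refine ⟨φ σ, ⟨σ, rfl⟩, k, inferInstance, inferInstance, fun i => red (a i), i0, binj,
      hi0, ?_, ?_, ?_⟩
    · intro j
      exact hσ (a j) (a (φ σ j)) (hφ σ j)
    · intro j hj
      rw [mem_nb, adj_symm, hadj] at hj
      have := congrArg red hj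
      rw [map_ev2, map_zero, hi0] at this
      rw [ev_pk]; exact this
    · intro y h1 h2 h3
      obtain ⟨j, rfl⟩ := hF.exists_root red hu h1
      refine ⟨j, ?_, rfl⟩
      rw [mem_nb, adj_symm, hadj]
      refine hF.lift red hu hs (fun e => h3 ?_) ?_ ?_
      · rw [e, hi0]
      · rw [hi0, ev_num]; exact num_ne (l := l) hR
      · rw [hi0, ← ev_pk]; exact h2
  refine comb φ.range ?_ ?_ (fd_rho (key 7 1 5 (fun k _ _ y hy => inv_ne (l := 7) sep1 hy) mR kR))
    (fd_tau (key 7 3 3 (fun k _ _ y hy => inv_ne (l := 7) sep2 hy) mT kT))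
    (fd_sigma (key 13 5 0 (fun k _ _ y hy => inv_ne (l := 13) sep3 hy) mS kS))
  · rintro h ⟨σ, rfl⟩ i j
    rw [Bool.eq_iff_iff, hA, hA, hφ, hφ]
    have := map_ev2 (σ : L →+* L) AL (x i) (x j)
    change σ _ = ev2 AL (σ (x i)) (σ (x j)) at this
    rw [← this, map_eq_zero_iff _ σ.injective]
  · intro i j
    obtain ⟨σ, hσ⟩ := htr _ (hxroot i) _ (hxroot j)
    refine ⟨φ σ, ⟨σ, rfl⟩, xinj ?_⟩
    rw [hφ, hσ]
end Main

end LP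

namespace LP
section Part1
open Polynomial

noncomputable def fA : ℚ[X] := X ^ 2 - 6 * X - 1
noncomputable def fB : ℚ[X] := 3 * X ^ 4 - 468 * X ^ 3 - 258 * X ^ 2 - 60 * X - 5
noncomputable def fC : ℚ[X] := 3 * X ^ 4 + 36 * X ^ 3 + 54 * X ^ 2 + 60 * X + 19
noncomputable def fD : ℚ[X] := 3 * X ^ 8 - 96 * X ^ 7 - 12 * X ^ 6 +
    432 * X ^ 5 + 1498 * X ^ 4 - 320 * X ^ 3 - 348 * X ^ 2 - 80 * X - 5
noncomputable def fE : ℚ[X] := X ^ 2 + 2 * X + 3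
noncomputable def fF : ℚ[X] := 3 * X ^ 2 + 6 * X + 1
noncomputable def fG : ℚ[X] := 3 * X ^ 4 - 12 * X ^ 3 + 38 * X ^ 2 + 12 * X + 3

lemma p_eq : p = fA ^ 2 * fB * fC ^ 4 * fD ^ 4 := rfl
lemma r_eq : r = -12500 * fE ^ 2 * fF ^ 8 * fG ^ 8 := rfl

lemma cop_of {f g : ℚ[X]} (a b : ℚ[X]) (n : ℤ) (hn : n ≠ 0) (h : a * f + b * g = (n : ℚ[X])) :
    IsCoprime f g := by
  refine ⟨C (n : ℚ)⁻¹ * a, C (n : ℚ)⁻¹ * b, ?_⟩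
  have h1 : (n : ℚ[X]) = C (n : ℚ) := by simp
  have h2 : C (n : ℚ)⁻¹ * C (n : ℚ) = 1 := by
    rw [← C_mul, inv_mul_cancel₀ (by exact_mod_cast hn), C_1]
  rw [h1] at h
  linear_combination C (n : ℚ)⁻¹ * h + h2

lemma copAE : IsCoprime fA fE :=
  cop_of ((3) + 2 * X) ((13) + (-2) * X) (36) (by norm_num) (by
    rw [fA, fE]; push_cast; ring)
lemma copAF : IsCoprime fA fF :=
  cop_of ((33) + 18 * X) ((37) + (-6) * X) (4) (by norm_num) (by
    rw [fA, fF]; push_cast; ring)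
lemma copAG : IsCoprime fA fG :=
  cop_of ((31) + 240 * X + (-75) * X ^ 2 + 18 * X ^ 3) ((37) + (-6) * X) (80) (by norm_num) (by
    rw [fA, fG]; push_cast; ring)
lemma copBE : IsCoprime fB fE :=
  cop_of ((1)) ((-681) + 474 * X + (-3) * X ^ 2) (-2048) (by norm_num) (by
    rw [fB, fE]; push_cast; ring)
lemma copBF : IsCoprime fB fF :=
  cop_of ((327) + 180 * X) ((1699) + 10326 * X + 28113 * X ^ 2 + (-180) * X ^ 3) (64) (by norm_num) (by
    rw [fB, fF]; push_cast; ring)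
lemma copBG : IsCoprime fB fG :=
  cop_of ((11849) + (-149451) * X + 45957 * X ^ 2 + (-10467) * X ^ 3) ((62415) + (-261765) * X + (-1636941) * X ^ 2 + 10467 * X ^ 3) (128000) (by norm_num) (by
    rw [fB, fG]; push_cast; ring)
lemma copCE : IsCoprime fC fE :=
  cop_of ((1)) ((15) + (-30) * X + (-3) * X ^ 2) (64) (by norm_num) (by
    rw [fC, fE]; push_cast; ring)
lemma copCF : IsCoprime fC fF :=
  cop_of ((-15) + (-9) * X) ((157) + 129 * X + 105 * X ^ 2 + 9 * X ^ 3) (-128) (by norm_num) (by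
    rw [fC, fF]; push_cast; ring)
lemma copCG : IsCoprime fC fG :=
  cop_of ((581) + (-7329) * X + 2253 * X ^ 2 + (-513) * X ^ 3) ((6987) + 6849 * X + 5955 * X ^ 2 + 513 * X ^ 3) (32000) (by norm_num) (by
    rw [fC, fG]; push_cast; ring)
lemma copDE : IsCoprime fD fE :=
  cop_of ((1)) ((-2729) + 1846 * X + (-205) * X ^ 2 + (-372) * X ^ 3 + (-183) * X ^ 4 + 102 * X ^ 5 + (-3) * X ^ 6) (-8192) (by norm_num) (by
    rw [fD, fE]; push_cast; ring)
lemma copDF : IsCoprime fD fF :=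
  cop_of ((2943) + 1620 * X) ((18811) + 130674 * X + 313287 * X ^ 2 + (-766224) * X ^ 3 + (-232731) * X ^ 4 + (-3078) * X ^ 5 + 52137 * X ^ 6 + (-1620) * X ^ 7) (4096) (by norm_num) (by
    rw [fD, fF]; push_cast; ring)
lemma copDG : IsCoprime fD fG :=
  cop_of ((-5563) + (-133076) * X + 41307 * X ^ 2 + (-9678) * X ^ 3) ((99955) + (-769960) * X + (-2311413) * X ^ 2 + 4453486 * X ^ 3 + 1400709 * X ^ 4 + 44436 * X ^ 5 + (-312291) * X ^ 6 + 9678 * X ^ 7) (327680) (by norm_num) (by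
    rw [fD, fG]; push_cast; ring)

lemma natDegree_p : p.natDegree = 56 := by
  have hA : fA.natDegree = 2 := by rw [fA]; compute_degree!
  have hB : fB.natDegree = 4 := by rw [fB]; compute_degree!
  have hC : fC.natDegree = 4 := by rw [fC]; compute_degree!
  have hD : fD.natDegree = 8 := by rw [fD]; compute_degree!
  have nA : fA ≠ 0 := ne_zero_of_natDegree_gt (n := 0) (by omega)
  have nB : fB ≠ 0 := ne_zero_of_natDegree_gt (n := 0) (by omega)
  have nC : fC ≠ 0 := ne_zero_of_natDegree_gt (n := 0) (by omega)
  have nD : fD ≠ 0 := ne_zero_of_natDegree_gt (n := 0) (by omega)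
  have h1 := pow_ne_zero 2 nA
  have h2 := pow_ne_zero 4 nC
  have h3 := pow_ne_zero 4 nD
  rw [p_eq, natDegree_mul (mul_ne_zero (mul_ne_zero h1 nB) h2) h3,
    natDegree_mul (mul_ne_zero h1 nB) h2, natDegree_mul h1 nB, natDegree_pow, natDegree_pow,
    natDegree_pow, hA, hB, hC, hD]

lemma natDegree_r : r.natDegree ≤ 52 := by
  have hE : fE.natDegree ≤ 2 := by rw [fE]; compute_degree
  have hF : fF.natDegree ≤ 2 := by rw [fF]; compute_degree
  have hG : fG.natDegree ≤ 4 := by rw [fG]; compute_degree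
  have h0 : (-12500 : ℚ[X]).natDegree ≤ 0 := by compute_degree
  rw [r_eq]
  exact natDegree_mul_le_of_le (natDegree_mul_le_of_le (natDegree_mul_le_of_le h0
    (natDegree_pow_le_of_le 2 hE)) (natDegree_pow_le_of_le 8 hF)) (natDegree_pow_le_of_le 8 hG)

lemma cop_pr : IsCoprime p r := by
  have hu : IsUnit (-12500 : ℚ[X]) := by
    have : (-12500 : ℚ[X]) = C (-12500) := by rw [C_neg]; rfl
    rw [this, isUnit_C]
    exact isUnit_iff_ne_zero.2 (by norm_num)
  have key : ∀ f : ℚ[X], IsCoprime f fE → IsCoprime f fF → IsCoprime f fG → IsCoprime f r := by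
    intro f h1 h2 h3
    rw [r_eq]
    exact ((((isCoprime_one_right (x := f)).of_isCoprime_of_dvd_right
      (hu.dvd)).mul_right h1.pow_right).mul_right h2.pow_right).mul_right h3.pow_right
  rw [p_eq]
  exact ((((key _ copAE copAF copAG).pow_left.mul_left (key _ copBE copBF copBG)).mul_left
    (key _ copCE copCF copCG).pow_left).mul_left (key _ copDE copDF copDG).pow_left)

lemma cop_pq : IsCoprime p q := by
  have := cop_pr.neg_right.add_mul_left_right 1
  rw [q]
  have e : p - r = -r + p * 1 := by ring
  rw [e]; exact this

lemma F_eq : F = C (1 - RatFunc.X) * p.map (algebraMap ℚ (RatFunc ℚ))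
    + C RatFunc.X * r.map (algebraMap ℚ (RatFunc ℚ)) := by
  rw [F, q, Polynomial.map_sub, C_sub, C_1]; ring

lemma one_sub_ne : (1 - RatFunc.X : RatFunc ℚ) ≠ 0 := by
  intro h
  have h1 : (RatFunc.X : RatFunc ℚ) = RatFunc.C 1 := by rw [map_one]; exact (sub_eq_zero.1 h).symm
  have := congrArg RatFunc.intDegree h1
  rw [RatFunc.intDegree_X, RatFunc.intDegree_C] at this
  exact one_ne_zero this

lemma natDegree_F : F.natDegree = 56 := by
  have h1 : (C (1 - RatFunc.X) * p.map (algebraMap ℚ (RatFunc ℚ))).natDegree = 56 := by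
    rw [natDegree_C_mul one_sub_ne, natDegree_map, natDegree_p]
  rw [F_eq, natDegree_add_eq_left_of_natDegree_lt, h1]
  rw [h1]
  refine lt_of_le_of_lt (natDegree_C_mul_le _ _) ?_
  rw [natDegree_map]
  exact lt_of_le_of_lt natDegree_r (by norm_num)

lemma irr_F : Irreducible F := by
  let φ : ℚ[X][X] := p.map (algebraMap ℚ ℚ[X]) - C X * q.map (algebraMap ℚ ℚ[X])
  have hq : q ≠ 0 := by
    intro h
    have := cop_pq
    rw [h, isCoprime_zero_right] at this
    have h1 := natDegree_eq_zero_of_isUnit this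
    rw [natDegree_p] at h1
    omega
  have hφ : Irreducible φ := by
    have : φ = Bivariate.swap (C p - X * C q) := by
      rw [map_sub, map_mul, Bivariate.swap_C, Bivariate.swap_C, Bivariate.swap_Y]; rfl
    rw [this, MulEquiv.irreducible_iff]
    have h2 := irreducible_C_mul_X_add_C (neg_ne_zero.mpr hq)
      ((IsCoprime.neg_right_iff _ _).mpr cop_pq).symm.isRelPrime
    have h3 : (C p - X * C q : ℚ[X][X]) = C (-q) * X + C p := by
      rw [C_neg]; ring
    rw [h3]; exact h2
  have hmap : φ.map (algebraMap ℚ[X] (RatFunc ℚ)) = F := by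
    simp only [φ, F, Polynomial.map_sub, Polynomial.map_mul, map_C, Polynomial.map_map,
      RatFunc.algebraMap_X]
    rw [← IsScalarTower.algebraMap_eq]
  have hd : φ.natDegree ≠ 0 := by
    intro h
    have := natDegree_map_le (f := algebraMap ℚ[X] (RatFunc ℚ)) (p := φ)
    rw [hmap, natDegree_F, h] at this
    omega
  rw [← hmap]
  exact ((hφ.isPrimitive hd).irreducible_iff_irreducible_map_fraction_map).1 hφ
end Part1

end LP

namespace LP
section Part2
open Polynomial

section
lemma PL_eq : PL = mul (mul (pow gA 2) gB) (mul (pow gC 4) (pow gD 4)) := by with_unfolding_all rfl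
lemma RL_eq : RL = mul (pow gE 2) (mul (pow gF 8) (pow gG 8)) := by with_unfolding_all rfl
end

lemma ev_PL {L : Type*} [Field L] [Algebra ℚ L] (x : L) :
    ev PL (3 * x) = 3 ^ 47 * aeval x p := by
  have hA : ev gA (3 * x) = 9 * aeval x fA := by
    rw [gA, fA]; simp [map_ofNat]; ring
  have hB : ev gB (3 * x) = 27 * aeval x fB := by
    rw [gB, fB]; simp [map_ofNat]; ring
  have hC : ev gC (3 * x) = 27 * aeval x fC := by
    rw [gC, fC]; simp [map_ofNat]; ring
  have hD : ev gD (3 * x) = 3 ^ 7 * aeval x fD := by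
    rw [gD, fD]; simp [map_ofNat]; ring
  rw [PL_eq, ev_mul, ev_mul, ev_mul, ev_pow, ev_pow, ev_pow, hA, hB, hC, hD, p_eq]
  simp only [map_mul, map_pow]
  ring

lemma ev_RL {L : Type*} [Field L] [Algebra ℚ L] (x : L) :
    -12500 * ev RL (3 * x) = 3 ^ 36 * aeval x r := by
  have hE : ev gE (3 * x) = 9 * aeval x fE := by
    rw [gE, fE]; simp [map_ofNat]; ring
  have hF : ev gF (3 * x) = 3 * aeval x fF := by
    rw [gF, fF]; simp [map_ofNat]; ring
  have hG : ev gG (3 * x) = 27 * aeval x fG := by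
    rw [gG, fG]; simp [map_ofNat]; ring
  have h0 : aeval x (-12500 : ℚ[X]) = -12500 := by simp [map_ofNat]
  rw [RL_eq, ev_mul, ev_mul, ev_pow, ev_pow, ev_pow, hE, hF, hG, r_eq]
  simp only [map_mul, map_pow, h0]
  ring

theorem main_card2 {K L : Type} [Field K] [Field L] [Algebra K L]
    [FiniteDimensional K L] [IsGalois K L] [CharZero K] (u : K)
    (hu : Transcendental ℤ u) (hsurj : ∀ z : K, ∃ x y : ℤ[X], z = aeval u x / aeval u y)
    (s : Finset L) (hc : s.card = 56)
    (hroot : ∀ x ∈ s, ev PL x + algebraMap K L u * ev RL x = 0)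
    (htr : ∀ x ∈ s, ∀ y ∈ s, ∃ σ : L ≃ₐ[K] L, σ x = y)
    (hfaith : ∀ σ : L ≃ₐ[K] L, (∀ x ∈ s, σ x = x) → σ = 1) :
    Nat.card (L ≃ₐ[K] L) = 80640 := by
  let _ : Algebra ℤ[X] K := (aeval u : ℤ[X] →ₐ[ℤ] K).toRingHom.toAlgebra
  let _ : Algebra ℤ[X] L := ((algebraMap K L).comp (aeval u : ℤ[X] →ₐ[ℤ] K).toRingHom).toAlgebra
  have : IsScalarTower ℤ[X] K L := IsScalarTower.of_algebraMap_eq (fun _ => rfl)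
  have : FaithfulSMul ℤ[X] K :=
    (faithfulSMul_iff_algebraMap_injective _ _).2 (transcendental_iff_injective.1 hu)
  have : IsFractionRing ℤ[X] K := IsFractionRing.of_field ℤ[X] K hsurj
  refine main_card s hc ?_ htr hfaith
  have e : algebraMap ℤ[X] L X = algebraMap K L u := by
    change algebraMap K L (aeval u X) = _
    rw [aeval_X]
  rw [e]; exact hroot

lemma u_tr {K : Type} [Field K] [CharZero K] {u t : K} {c : ℤ} (hc : c ≠ 0)
    (h : u * (1 - t) = c * t) (ht : Transcendental ℤ t) : Transcendental ℤ u := by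
  intro hu
  have hX : t * (c + u) = u := by linear_combination -h
  have hne : (c + u : K) ≠ 0 := by
    intro h0
    rw [h0, mul_zero] at hX
    rw [← hX, add_zero] at h0
    exact hc (by exact_mod_cast h0)
  have h1 : IsAlgebraic ℤ (c + u : K) := (isAlgebraic_algebraMap c).add hu
  apply ht
  rw [eq_div_of_mul_eq hne hX, div_eq_mul_inv]
  exact hu.mul h1.inv

lemma u_surj {K : Type} [Field K] [CharZero K] {u t : K} {c : ℤ} (hc : c ≠ 0)
    (h : u * (1 - t) = c * t) (ht : ∀ S : Subfield K, t ∈ S → ∀ z, z ∈ S)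
    (z : K) : ∃ x y : ℤ[X], z = aeval u x / aeval u y := by
  have hX : t * (c + u) = u := by linear_combination -h
  have hne : (c + u : K) ≠ 0 := by
    intro h0
    rw [h0, mul_zero] at hX
    rw [← hX, add_zero] at h0
    exact hc (by exact_mod_cast h0)
  let S := Subfield.closure ({u} : Set K)
  have hu : u ∈ S := Subfield.subset_closure rfl
  have hz : z ∈ S := by
    apply ht
    rw [eq_div_of_mul_eq hne hX]
    exact S.div_mem hu (S.add_mem (intCast_mem S c) hu)
  obtain ⟨y, hy, w, hw, rfl⟩ := Subfield.mem_closure_iff.1 hz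
  have hr : Subring.closure ({u} : Set K) ≤ (aeval u : ℤ[X] →ₐ[ℤ] K).toRingHom.range := by
    rw [Subring.closure_le, Set.singleton_subset_iff]
    exact ⟨X, aeval_X u⟩
  obtain ⟨y', rfl⟩ := hr hy
  obtain ⟨w', rfl⟩ := hr hw
  exact ⟨y', w', rfl⟩

lemma gen_t (S : Subfield (RatFunc ℚ)) (ht : RatFunc.X ∈ S) (z : RatFunc ℚ) : z ∈ S := by
  have hp : ∀ f : ℚ[X], algebraMap ℚ[X] (RatFunc ℚ) f ∈ S := by
    intro f
    induction f using Polynomial.induction_on' with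
    | add a b ha hb => rw [map_add]; exact S.add_mem ha hb
    | monomial n a =>
      rw [← C_mul_X_pow_eq_monomial, map_mul, map_pow, RatFunc.algebraMap_X, RatFunc.algebraMap_C]
      refine S.mul_mem ?_ (S.pow_mem ht n)
      have : RatFunc.C a = (a : RatFunc ℚ) := map_ratCast RatFunc.C a
      rw [this]
      exact SubfieldClass.ratCast_mem S a
  rw [← RatFunc.num_div_denom z]
  exact S.div_mem (hp _) (hp _)

lemma t_tr : @Transcendental ℤ (RatFunc ℚ) _ _ (Ring.toIntAlgebra _) RatFunc.X := by
  rintro ⟨f, hf, h0⟩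
  refine RatFunc.transcendental_X (K := ℚ) ⟨f.map (Int.castRingHom ℚ), ?_, ?_⟩
  · exact (Polynomial.map_ne_zero_iff Int.cast_injective).2 hf
  · change eval₂ _ RatFunc.X (f.map (Int.castRingHom ℚ)) = 0
    change eval₂ _ RatFunc.X f = 0 at h0
    rw [eval₂_map, ← h0]
    congr 1
    exact RingHom.ext_int _ _

lemma aeval_F {L : Type*} [Field L] [Algebra (RatFunc ℚ) L] [Algebra ℚ L] (x : L) :
    aeval x F = algebraMap (RatFunc ℚ) L (1 - RatFunc.X) * aeval x p
      + algebraMap (RatFunc ℚ) L RatFunc.X * aeval x r := by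
  have e : ∀ f : ℚ[X], aeval x (f.map (algebraMap ℚ (RatFunc ℚ))) = aeval x f := by
    intro f
    rw [aeval_def, aeval_def, eval₂_map]
    congr 1
    exact Subsingleton.elim _ _
  rw [F_eq, map_add, map_mul, map_mul, aeval_C, aeval_C, e, e]

lemma card_gal : Nat.card F.Gal = 80640 := by
  classical
  have hsep : F.Separable := irr_F.separable
  have : IsGalois (RatFunc ℚ) F.SplittingField := IsGalois.of_separable_splitting_field hsep
  have hsp : (F.map (algebraMap (RatFunc ℚ) F.SplittingField)).Splits := SplittingField.splits F
  let c : ℤ := -12500 * 3 ^ 11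
  have hc : c ≠ 0 := by norm_num [c]
  let u : RatFunc ℚ := (c : RatFunc ℚ) * RatFunc.X / (1 - RatFunc.X)
  have hu : u * (1 - RatFunc.X) = (c : RatFunc ℚ) * RatFunc.X := div_mul_cancel₀ _ one_sub_ne
  have h3 : (3 : F.SplittingField) ≠ 0 := by norm_num
  have hmul : Function.Injective (fun x : F.SplittingField => 3 * x) := mul_right_injective₀ h3
  let s : Finset F.SplittingField := (F.rootSet F.SplittingField).toFinset.image (fun x => 3 * x)
  have hcs : ∀ x ∈ F.rootSet F.SplittingField, 3 * x ∈ s := fun x hx =>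
    Finset.mem_image_of_mem _ (Set.mem_toFinset.2 hx)
  have h30 : ∀ σ : F.SplittingField ≃ₐ[RatFunc ℚ] F.SplittingField, σ 3 = 3 := fun σ => map_ofNat σ 3
  refine main_card2 (K := RatFunc ℚ) (L := F.SplittingField) u (u_tr hc hu t_tr)
    (u_surj hc hu gen_t) s ?_ ?_ ?_ ?_
  · rw [Finset.card_image_of_injective _ hmul, Set.toFinset_card,
      card_rootSet_eq_natDegree hsep hsp, natDegree_F]
  · intro y hy
    obtain ⟨x, hx, rfl⟩ := Finset.mem_image.1 hy
    have h0 := (mem_rootSet.1 (Set.mem_toFinset.1 hx)).2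
    rw [aeval_F] at h0
    have hu' := congrArg (algebraMap (RatFunc ℚ) F.SplittingField) hu
    rw [map_mul, map_mul, map_intCast] at hu'
    have hne : algebraMap (RatFunc ℚ) F.SplittingField (1 - RatFunc.X) ≠ 0 :=
      (_root_.map_ne_zero _).2 one_sub_ne
    have e1 := ev_PL x
    have e2 := ev_RL x
    apply mul_left_cancel₀ hne
    have hcc : ((c : ℤ) : F.SplittingField) = -12500 * 3 ^ 11 := by
      simp only [c]; push_cast; ring
    rw [hcc] at hu'
    rw [mul_zero]
    generalize algebraMap (RatFunc ℚ) F.SplittingField (1 - RatFunc.X) = a at *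
    generalize algebraMap (RatFunc ℚ) F.SplittingField RatFunc.X = t at *
    generalize algebraMap (RatFunc ℚ) F.SplittingField u = v at *
    linear_combination a * e1 + ev RL (3 * x) * hu' + 3 ^ 11 * t * e2 + 3 ^ 47 * h0
  · intro y hy z hz
    obtain ⟨x, hx, rfl⟩ := Finset.mem_image.1 hy
    obtain ⟨w, hw, rfl⟩ := Finset.mem_image.1 hz
    have hx := minpoly.eq_of_irreducible irr_F (mem_rootSet.mp (Set.mem_toFinset.1 hx)).2
    have hw := minpoly.eq_of_irreducible irr_F (mem_rootSet.mp (Set.mem_toFinset.1 hw)).2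
    obtain ⟨g, hg⟩ := (Normal.minpoly_eq_iff_mem_orbit F.SplittingField).mp (hw.symm.trans hx)
    refine ⟨g, ?_⟩
    change g (3 * x) = 3 * w
    rw [map_mul, h30]
    exact congrArg _ hg
  · intro σ hσ
    refine Gal.ext (p := F) (σ := σ) (τ := 1) (fun x hx => ?_)
    have := hσ _ (hcs x hx)
    rw [map_mul, h30] at this
    exact hmul this
end Part2

end LP

theorem belyi_deg56_stmt14 :
    F.natDegree = 56 ∧ Irreducible F ∧ Nat.card F.Gal = 80640 :=
  ⟨LP.natDegree_F, LP.irr_F, LP.card_gal⟩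
end
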